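/- arXiv:1504.05293 — 4 statements merged into one kernel-verified Lean document; each statement's English description precedes it below -/
import Mathlib

section
/- Let d₀, d₁, d₂ ∈ Z₇ with d₀ + d₁ + d₂ ≡ 0 (mod 7). Then the edge set E₀₁(d₀) ∪ E₁₂(d₁) ∪ E₂₀(d₂) forms a C₃-factor of the complete tripartite graph K_{7,7,7}. -/
open SimpleGraph

/-- `F` is an `H`-factor (of the complete graph on its vertex type, or of any graph
containing it): every connected component of `F`, viewed as an induced subgraph,
is isomorphic to `H`.  Since `F` is a graph on all of `V`, it is automatically spanning. -/
def IsHFactor {V W : Type*} (H : SimpleGraph W) (F : SimpleGraph V) : Prop :=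
  ∀ c : F.ConnectedComponent, Nonempty (F.induce c.supp ≃g H)

/-- A `C_k`-factor: a spanning subgraph each of whose connected components is a
cycle of length `k` (in particular it is 2-regular). -/
def IsCycleFactor {V : Type*} (k : ℕ) (F : SimpleGraph V) : Prop :=
  IsHFactor (SimpleGraph.cycleGraph k) F

/-- `(G; C_m^r, C_k^s)`: a partition of the edge set of `G` into `r` `C_m`-factors
and `s` `C_k`-factors. -/
def IsCycleDecomp {V : Type*} (G : SimpleGraph V) (m k r s : ℕ) : Prop :=
  ∃ F : Fin r ⊕ Fin s → SimpleGraph V,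
    (∀ i, F i ≤ G) ∧
    (∀ e ∈ G.edgeSet, ∃! i, e ∈ (F i).edgeSet) ∧
    (∀ i : Fin r, IsCycleFactor m (F (Sum.inl i))) ∧
    (∀ j : Fin s, IsCycleFactor k (F (Sum.inr j)))

/-- The complete tripartite graph `K_{7,7,7}` on vertex set `Z₇ × Z₃`, with the three
partite sets `V_i = Z₇ × {i}` for `i ∈ Z₃` (the vertex `j_i` is the pair `(j, i)`). -/
def K777 : SimpleGraph (ZMod 7 × ZMod 3) where
  Adj x y := x.2 ≠ y.2
  symm := ⟨fun _ _ h => h.symm⟩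
  loopless := ⟨fun _ h => h rfl⟩

/-- The edge set `E_{ij}(d) = {{l_i, (l+d)_j} : l ∈ Z₇}`. -/
def Eij (i j : ZMod 3) (d : ZMod 7) : Set (Sym2 (ZMod 7 × ZMod 3)) :=
  {e | ∃ l : ZMod 7, e = s((l, i), (l + d, j))}

/-!
Since `d₀ + d₁ + d₂ = 0`, there is a potential `g` with `dᵢ = g (i + 1) - g i`. Every edge of the
graph therefore preserves the level `x.1 - g x.2` of a vertex `x = (x.1, x.2)`, and each level set
is a translate of the graph of `g`, hence a copy of the triangle. The same argument lifts any
connected graph along a potential, and in particular a cycle of any length.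
-/

section PotentialLift

variable {A I : Type*} [AddGroup A]

/-- The derived graph of `H` for the voltage `-g i + g j` on the arc from `i` to `j`, that is, for
a voltage assignment which is the coboundary of the potential `g`. -/
def potentialLift (H : SimpleGraph I) (g : I → A) : SimpleGraph (A × I) where
  Adj x y := H.Adj x.2 y.2 ∧ x.1 - g x.2 = y.1 - g y.2
  symm := ⟨fun _ _ h => ⟨h.1.symm, h.2.symm⟩⟩
  loopless := ⟨fun _ h => h.1.ne rfl⟩

namespace potentialLift

variable {H : SimpleGraph I} {g : I → A}

variable (H g) in
/-- The copy of `H` at level `a` in its lift along `g`. -/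
def sheet (a : A) : H ↪g potentialLift H g where
  toFun i := (a + g i, i)
  inj' _ _ h := congrArg Prod.snd h
  map_rel_iff' {i j} := and_iff_left <|
    (add_sub_cancel_right a (g i)).trans (add_sub_cancel_right a (g j)).symm

theorem mem_range_sheet {a : A} {x : A × I} :
    x ∈ Set.range (sheet H g a) ↔ x.1 - g x.2 = a := by
  constructor
  · rintro ⟨i, rfl⟩
    exact add_sub_cancel_right a (g i)
  · rintro rfl
    exact ⟨x.2, Prod.ext (sub_add_cancel x.1 (g x.2)) rfl⟩

theorem sub_eq_sub_of_reachable {x y : A × I} (h : (potentialLift H g).Reachable x y) :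
    x.1 - g x.2 = y.1 - g y.2 := by
  obtain ⟨w⟩ := h
  induction w with
  | nil => rfl
  | cons hadj _ ih => exact hadj.2.trans ih

theorem reachable_iff (hH : H.Preconnected) {x y : A × I} :
    (potentialLift H g).Reachable x y ↔ x.1 - g x.2 = y.1 - g y.2 := by
  refine ⟨sub_eq_sub_of_reachable, fun hxy => ?_⟩
  obtain ⟨i, hi⟩ : x ∈ Set.range (sheet H g (y.1 - g y.2)) := mem_range_sheet.2 hxy
  obtain ⟨j, hj⟩ : y ∈ Set.range (sheet H g (y.1 - g y.2)) := mem_range_sheet.2 rfl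
  have hij : (potentialLift H g).Reachable (sheet H g _ i) (sheet H g _ j) :=
    (hH i j).map (sheet H g (y.1 - g y.2)).toHom
  rwa [hi, hj] at hij

theorem supp_connectedComponentMk (hH : H.Preconnected) (x : A × I) :
    ((potentialLift H g).connectedComponentMk x).supp =
      Set.range (sheet H g (x.1 - g x.2)) := by
  ext y
  rw [ConnectedComponent.mem_supp_iff, ConnectedComponent.eq, reachable_iff hH, mem_range_sheet]

theorem isHFactor (hH : H.Preconnected) (g : I → A) : IsHFactor H (potentialLift H g) := by
  intro c
  induction c using ConnectedComponent.ind with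
  | _ x =>
    rw [supp_connectedComponentMk hH]
    exact ⟨(sheet H g _).isoInduceRange.symm⟩

end potentialLift

end PotentialLift

/-- The edge set `E_{ij}(d)` on the vertex set `A × I`; `Eij` is the case `A = ZMod 7`,
`I = ZMod 3`. -/
def differenceEdges {A I : Type*} [Add A] (i j : I) (d : A) : Set (Sym2 (A × I)) :=
  {e | ∃ l : A, e = s((l, i), (l + d, j))}

section Cycle

variable {A : Type*} [AddGroup A]

theorem edgeSet_potentialLift_cycleGraph {n : ℕ} (g : Fin (n + 2) → A) :
    (potentialLift (cycleGraph (n + 2)) g).edgeSet =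
      ⋃ i, differenceEdges i (i + 1) (-g i + g (i + 1)) := by
  have mem_of_level_eq {a b : A} {i : Fin (n + 2)} (h : a - g i = b - g (i + 1)) :
      s((a, i), (b, i + 1)) ∈ ⋃ i, differenceEdges i (i + 1) (-g i + g (i + 1)) := by
    have hb : a + (-g i + g (i + 1)) = b := by
      rw [← add_assoc, ← sub_eq_add_neg, h, sub_add_cancel]
    exact Set.mem_iUnion.2 ⟨i, a, by rw [hb]⟩
  apply Set.Subset.antisymm
  · intro e he
    induction e using Sym2.ind with
    | _ x y =>
      obtain ⟨a, i⟩ := x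
      obtain ⟨b, j⟩ := y
      obtain ⟨hij, hab⟩ := he
      rcases cycleGraph_adj.1 hij with hi | hj
      · obtain rfl : i = j + 1 := eq_add_of_sub_eq' hi
        rw [Sym2.eq_swap]
        exact mem_of_level_eq hab.symm
      · obtain rfl : j = i + 1 := eq_add_of_sub_eq' hj
        exact mem_of_level_eq hab
  · refine Set.iUnion_subset fun i => ?_
    rintro _ ⟨l, rfl⟩
    refine ⟨cycleGraph_adj.2 (Or.inr (add_sub_cancel_left i 1)), ?_⟩
    simp only [← add_assoc, ← sub_eq_add_neg, add_sub_cancel_right]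

theorem exists_potential_of_sum_ofFn_eq_zero {n : ℕ} (d : Fin (n + 1) → A)
    (hd : (List.ofFn d).sum = 0) : ∃ g : Fin (n + 1) → A, ∀ i, -g i + g (i + 1) = d i := by
  have partialSum_last : Fin.partialSum d (Fin.last (n + 1)) = 0 := by
    simpa [Fin.partialSum, List.take_of_length_le] using hd
  refine ⟨fun i => Fin.partialSum d i.castSucc, fun i => ?_⟩
  suffices h : Fin.partialSum d (i + 1).castSucc = Fin.partialSum d i.succ from
    (congrArg (_ + ·) h).trans (Fin.partialSum_right_neg d i)
  induction i using Fin.lastCases with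
  | last =>
    rw [Fin.last_add_one, Fin.castSucc_zero, Fin.partialSum_zero, Fin.succ_last, partialSum_last]
  | cast i => rw [Fin.coeSucc_eq_succ, Fin.succ_castSucc]

theorem triangle_factor_of_sum_zero_general {n : ℕ} (d : Fin (n + 2) → A)
    (hd : (List.ofFn d).sum = 0) :
    ∃ F : SimpleGraph (A × Fin (n + 2)),
      F ≤ (⊤ : SimpleGraph (Fin (n + 2))).comap Prod.snd ∧
      F.edgeSet = ⋃ i, differenceEdges i (i + 1) (d i) ∧
      IsCycleFactor (n + 2) F := by
  obtain ⟨g, hg⟩ := exists_potential_of_sum_ofFn_eq_zero d hd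
  refine ⟨potentialLift (cycleGraph (n + 2)) g, ?_, ?_, ?_⟩
  · exact fun _ _ h => h.1.ne
  · simp only [edgeSet_potentialLift_cycleGraph, hg]
  · exact potentialLift.isHFactor cycleGraph_preconnected g

end Cycle

theorem iUnion_fin_three {α : Type*} (s : Fin 3 → Set α) : ⋃ i, s i = s 0 ∪ s 1 ∪ s 2 := by
  ext
  simp [Fin.exists_fin_succ, or_assoc]

/-- Lemma 2.1: if `d₀ + d₁ + d₂ ≡ 0 (mod 7)`, then the edges of
`E₀₁(d₀) ∪ E₁₂(d₁) ∪ E₂₀(d₂)` form a `C₃`-factor of `K_{7,7,7}`. -/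
theorem triangle_factor_of_sum_zero (d₀ d₁ d₂ : ZMod 7) (h : d₀ + d₁ + d₂ = 0) :
    ∃ F : SimpleGraph (ZMod 7 × ZMod 3),
      F ≤ K777 ∧
      F.edgeSet = Eij 0 1 d₀ ∪ Eij 1 2 d₁ ∪ Eij 2 0 d₂ ∧
      IsCycleFactor 3 F := by
  obtain ⟨F, hle, hE, hF⟩ := triangle_factor_of_sum_zero_general ![d₀, d₁, d₂]
    (by simpa [add_assoc] using h)
  exact ⟨F, hle, hE.trans (iUnion_fin_three _), hF⟩
end

section
/- The edge set ⋃_{d ∈ {1,6}} (E₀₁(d) ∪ E₁₂(d) ∪ E₂₀(d)) can be partitioned into 2 edge-disjoint C₇-factors of the complete tripartite graph K_{7,7,7}. -/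
open SimpleGraph

/-! For any graph `H` and any map `f : V → ZMod 3`, the graphs of the three translates `c + f` carry
three disjoint copies of `H` on the vertex set `V × ZMod 3`, which form an `H`-factor when `H` is
connected. If `f` is a proper colouring of `H`, its differences along edges are `±1`, so the copies
built from `f` and from `-f` use complementary edges and together exhaust the tensor product
`H × K₃`. The heptagon is connected and 3-colourable, and the edge set in question is that of
`C₇ × K₃`, because the differences `1` and `6 = -1` are those along the edges of `C₇`. -/

section Tensor

variable {V A : Type*}

/-- The tensor (categorical) product of two graphs. The graph to be decomposed is `C₇ × K₃`. -/
def tensorProd (G : SimpleGraph V) (H : SimpleGraph A) : SimpleGraph (V × A) :=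
  G.comap Prod.fst ⊓ H.comap Prod.snd

variable [AddGroup A]

/-- The covering graph of `H` with fibre `A` for which the lift of an edge `vw` that starts
at `(v, a)` ends at `(w, a - f v + f w)`. It is the disjoint union of copies of `H` supported on
the graphs of the translates `c + f`, for `c : A`. -/
def coboundaryCover (H : SimpleGraph V) (f : V → A) : SimpleGraph (V × A) where
  Adj x y := H.Adj x.1 y.1 ∧ x.2 - f x.1 = y.2 - f y.1
  symm := ⟨fun _ _ h => ⟨h.1.symm, h.2.symm⟩⟩
  loopless := ⟨fun _ h => h.1.ne rfl⟩

namespace coboundaryCover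

variable (H : SimpleGraph V) {f g : V → A}

/-- The sheet of the cover over the graph of the translate `c + f`. -/
def sheet (f : V → A) (c : A) : H ↪g coboundaryCover H f where
  toFun v := (v, c + f v)
  inj' _ _ h := congrArg Prod.fst h
  map_rel_iff' {v w} :=
    and_iff_left ((add_sub_cancel_right c (f v)).trans (add_sub_cancel_right c (f w)).symm)

variable {H}

lemma mem_range_sheet_iff {c : A} {x : V × A} :
    x ∈ Set.range (sheet H f c) ↔ x.2 - f x.1 = c := by
  constructor
  · rintro ⟨v, rfl⟩
    exact add_sub_cancel_right c (f v)
  · rintro rfl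
    exact ⟨x.1, Prod.ext rfl (sub_add_cancel x.2 (f x.1))⟩

lemma reachable_iff (hH : H.Preconnected) {x y : V × A} :
    (coboundaryCover H f).Reachable x y ↔ x.2 - f x.1 = y.2 - f y.1 := by
  constructor
  · rintro ⟨p⟩
    induction p with
    | nil => rfl
    | cons h _ ih => exact h.2.trans ih
  · intro hx
    generalize hy : y.2 - f y.1 = c at hx
    obtain ⟨v, rfl⟩ := (mem_range_sheet_iff (H := H)).2 hx
    obtain ⟨w, rfl⟩ := (mem_range_sheet_iff (H := H)).2 hy
    exact (hH v w).map (sheet H f c).toHom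

lemma isHFactor (hH : H.Preconnected) (f : V → A) : IsHFactor H (coboundaryCover H f) := by
  intro C
  induction C using ConnectedComponent.ind with
  | _ x =>
    have supp_eq : ((coboundaryCover H f).connectedComponentMk x).supp =
        Set.range (sheet H f (x.2 - f x.1)) := by
      ext y
      rw [ConnectedComponent.mem_supp_iff, ConnectedComponent.eq, reachable_iff hH,
        mem_range_sheet_iff]
    rw [supp_eq]
    exact ⟨(sheet H f (x.2 - f x.1)).isoInduceRange.symm⟩

lemma disjoint (h : ∀ v w, H.Adj v w → f v - g v ≠ f w - g w) :
    Disjoint (coboundaryCover H f) (coboundaryCover H g) := by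
  rw [← disjoint_edgeSet, Set.disjoint_left, Sym2.forall]
  rintro ⟨v, a⟩ ⟨w, b⟩ ⟨hvw, hf⟩ ⟨-, hg⟩
  refine h v w hvw ?_
  calc f v - g v = -(a - f v) + (a - g v) := by simp [sub_eq_add_neg, add_assoc]
    _ = -(b - f w) + (b - g w) := by rw [hf, hg]
    _ = f w - g w := by simp [sub_eq_add_neg, add_assoc]

lemma le_tensorProd_top (h : ∀ v w, H.Adj v w → f v ≠ f w) :
    coboundaryCover H f ≤ tensorProd H ⊤ := by
  rintro ⟨v, a⟩ ⟨w, b⟩ ⟨hvw, hab⟩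
  refine ⟨hvw, fun hab' : a = b => h v w hvw ?_⟩
  subst hab'
  exact sub_right_injective hab

end coboundaryCover

end Tensor

section ThreeColoring

variable {V : Type*} {H : SimpleGraph V}

lemma zmod_three_eq_or_eq_neg {a b : ZMod 3} (ha : a ≠ 0) (hb : b ≠ 0) : a = b ∨ a = -b := by
  decide +revert

lemma coboundaryCover_sup_neg (f : H.Coloring (ZMod 3)) :
    coboundaryCover H f ⊔ coboundaryCover H (-f) = tensorProd H ⊤ := by
  refine le_antisymm (sup_le ?_ ?_) ?_
  · exact coboundaryCover.le_tensorProd_top fun _ _ => f.valid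
  · exact coboundaryCover.le_tensorProd_top fun _ _ h => neg_injective.ne (f.valid h)
  · rintro ⟨v, a⟩ ⟨w, b⟩ ⟨hvw, hab⟩
    obtain h | h := zmod_three_eq_or_eq_neg (sub_ne_zero.2 hab) (sub_ne_zero.2 (f.valid hvw))
    · exact .inl ⟨hvw, sub_eq_sub_iff_sub_eq_sub.2 h⟩
    · refine .inr ⟨hvw, sub_eq_sub_iff_sub_eq_sub.2 (h.trans ?_)⟩
      exact neg_sub' (f v) (f w)

lemma disjoint_coboundaryCover_neg (f : H.Coloring (ZMod 3)) :
    Disjoint (coboundaryCover H f) (coboundaryCover H (-f)) := by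
  have sub_neg_eq : ∀ a : ZMod 3, a - -a = -a := by decide
  refine coboundaryCover.disjoint fun v w h => ?_
  rw [Pi.neg_apply, Pi.neg_apply, sub_neg_eq, sub_neg_eq]
  exact neg_injective.ne (f.valid h)

theorem two_heptagon_factors_1_6_general (hH : H.Preconnected) (hcol : H.Colorable 3) :
    ∃ F₁ F₂ : SimpleGraph (V × ZMod 3),
      F₁ ≤ (⊤ : SimpleGraph (ZMod 3)).comap Prod.snd ∧
      F₂ ≤ (⊤ : SimpleGraph (ZMod 3)).comap Prod.snd ∧
      IsHFactor H F₁ ∧ IsHFactor H F₂ ∧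
      Disjoint F₁.edgeSet F₂.edgeSet ∧
      F₁.edgeSet ∪ F₂.edgeSet = (tensorProd H (⊤ : SimpleGraph (ZMod 3))).edgeSet := by
  obtain ⟨f⟩ : Nonempty (H.Coloring (ZMod 3)) := hcol
  have sup_eq := coboundaryCover_sup_neg f
  have sup_le_comap : coboundaryCover H f ⊔ coboundaryCover H (-f) ≤
      (⊤ : SimpleGraph (ZMod 3)).comap Prod.snd := sup_eq.trans_le inf_le_right
  exact ⟨coboundaryCover H f, coboundaryCover H (-f),
    le_sup_left.trans sup_le_comap, le_sup_right.trans sup_le_comap,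
    coboundaryCover.isHFactor hH _, coboundaryCover.isHFactor hH _,
    disjoint_edgeSet.2 (disjoint_coboundaryCover_neg f), by rw [← edgeSet_sup, sup_eq]⟩

end ThreeColoring

lemma mk_mem_Eij {i j : ZMod 3} {d : ZMod 7} {x y : ZMod 7 × ZMod 3} :
    s(x, y) ∈ Eij i j d ↔
      (x.2 = i ∧ y.2 = j ∧ y.1 = x.1 + d) ∨ (y.2 = i ∧ x.2 = j ∧ x.1 = y.1 + d) := by
  obtain ⟨a, p⟩ := x
  obtain ⟨b, q⟩ := y
  simp only [Eij, Set.mem_ofPred_eq, Sym2.eq_iff, Prod.mk.injEq]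
  grind

lemma mk_mem_Eij_union {d : ZMod 7} {x y : ZMod 7 × ZMod 3} :
    s(x, y) ∈ Eij 0 1 d ∪ Eij 1 2 d ∪ Eij 2 0 d ↔
      (y.2 = x.2 + 1 ∧ y.1 = x.1 + d) ∨ (x.2 = y.2 + 1 ∧ x.1 = y.1 + d) := by
  have succ_iff : ∀ i j : ZMod 3,
      j = i + 1 ↔ (i = 0 ∧ j = 1) ∨ (i = 1 ∧ j = 2) ∨ (i = 2 ∧ j = 0) := by decide
  simp only [Set.mem_union, mk_mem_Eij, succ_iff]
  tauto

lemma edgeSet_tensorProd_cycleGraph_seven_top :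
    (tensorProd (V := ZMod 7) (cycleGraph 7) (⊤ : SimpleGraph (ZMod 3))).edgeSet =
      ⋃ d ∈ ({1, 6} : Set (ZMod 7)), (Eij 0 1 d ∪ Eij 1 2 d ∪ Eij 2 0 d) := by
  have sub_eq_one_iff : ∀ a b : ZMod 7,
      (a - b = 1 ∨ b - a = 1) ↔ (b = a + 1 ∨ b = a + 6) := by decide
  have add_six_iff : ∀ a b : ZMod 7, a = b + 6 ↔ b = a + 1 := by decide
  have ne_iff : ∀ i j : ZMod 3, i ≠ j ↔ j = i + 1 ∨ i = j + 1 := by decide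
  ext e
  induction e using Sym2.ind with
  | _ x y =>
    have adj_iff : (tensorProd (V := ZMod 7) (cycleGraph 7) ⊤).Adj x y ↔
        (y.1 = x.1 + 1 ∨ y.1 = x.1 + 6) ∧ (y.2 = x.2 + 1 ∨ x.2 = y.2 + 1) :=
      and_congr (cycleGraph_adj.trans (sub_eq_one_iff x.1 y.1)) (ne_iff x.2 y.2)
    rw [mem_edgeSet, adj_iff, Set.biUnion_insert, Set.biUnion_singleton, Set.mem_union,
      mk_mem_Eij_union, mk_mem_Eij_union, add_six_iff, add_six_iff]
    tauto

/-- Lemma 2.3: the edges of `⋃_{d ∈ {1,6}} (E₀₁(d) ∪ E₁₂(d) ∪ E₂₀(d))` can be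
decomposed into two edge-disjoint `C₇`-factors of `K_{7,7,7}`. -/
theorem two_heptagon_factors_1_6 :
    ∃ F₁ F₂ : SimpleGraph (ZMod 7 × ZMod 3),
      F₁ ≤ K777 ∧ F₂ ≤ K777 ∧
      IsCycleFactor 7 F₁ ∧ IsCycleFactor 7 F₂ ∧
      Disjoint F₁.edgeSet F₂.edgeSet ∧
      F₁.edgeSet ∪ F₂.edgeSet =
        ⋃ d ∈ ({1, 6} : Set (ZMod 7)), (Eij 0 1 d ∪ Eij 1 2 d ∪ Eij 2 0 d) := by
  rw [← edgeSet_tensorProd_cycleGraph_seven_top]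
  exact two_heptagon_factors_1_6_general cycleGraph_preconnected
    (cycleGraph.tricoloring 7 (by simp)).colorable
end

section
/- For every α ∈ {0, 1, 3, 5, 7} and β = 7 − α, the complete tripartite graph K_{7,7,7} admits a decomposition of its edge set into α C₃-factors and β C₇-factors. -/
open SimpleGraph

/-!
The vertex set is `ZMod 7 × ZMod 3`, and edges are sorted by the difference of their first
coordinates, up to sign. The differences in `[-k, k]` are used up by `2 * k + 1` triangle factors,
each consisting of the translates of one transversal triangle; the triangles come from an
orthomorphism of the interval `[-k, k]`. For any other difference `u`, let `h` be a colouring of the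
cycle `0, u, 2u, …` that is proper, odd and takes values in `ZMod 3`. The `7`-cycles
`m ↦ (m * u, c + h m)` form a factor for `u`, the `7`-cycles `m ↦ (m * u, c - h m)` form one for
`-u`, and together they contain every edge of difference `±u` exactly once, since two nonzero
elements of `ZMod 3` are equal or opposite. This settles every odd `α = 2 * k + 1`.

For `α = 0`, all seven factors are the translates of a single one, in which any two parts are joined
by exactly one edge of each difference.
-/

section Factor

variable {V W W' ι : Type*} {H : SimpleGraph W} {H' : SimpleGraph W'} {F : SimpleGraph V}

theorem IsHFactor.congr (hF : IsHFactor H F) (e : H ≃g H') : IsHFactor H' F :=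
  fun c ↦ (hF c).map fun f ↦ f.trans e

theorem isHFactor_of_iso_bot_boxProd (hH : H.Connected)
    (e : F ≃g (⊥ : SimpleGraph ι) □ H) : IsHFactor H F := by
  intro c
  induction c using ConnectedComponent.ind with | _ v
  have mem_supp (x : V) : x ∈ (F.connectedComponentMk v).supp ↔ (e x).1 = (e v).1 := by
    rw [ConnectedComponent.mem_supp_iff, ConnectedComponent.eq, ← e.reachable_iff,
      reachable_boxProd, reachable_bot]
    exact and_iff_left (hH.preconnected _ _)
  exact ⟨{
    toFun x := (e x).2
    invFun a := ⟨e.symm ((e v).1, a), by simp [mem_supp]⟩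
    left_inv := fun ⟨x, hx⟩ ↦ Subtype.ext <| by
      simp [← (mem_supp x).1 hx]
    right_inv a := by simp
    map_rel_iff' := @fun ⟨x, hx⟩ ⟨y, hy⟩ ↦ by
      have same : (e x).1 = (e y).1 := ((mem_supp x).1 hx).trans ((mem_supp y).1 hy).symm
      simp [← e.map_adj_iff (v := x), boxProd_adj, same] }⟩

theorem isHFactor_comap_bot_boxProd (hH : H.Connected) {f : V → ι × W}
    (hf : Function.Bijective f) :
    IsHFactor H (((⊥ : SimpleGraph ι) □ H).comap f) :=
  isHFactor_of_iso_bot_boxProd hH (Iso.comap (Equiv.ofBijective f hf) _)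

theorem nonempty_circulantGraph_one_iso_cycleGraph (n : ℕ) [NeZero n] :
    Nonempty (circulantGraph ({1} : Set (ZMod n)) ≃g cycleGraph n) := by
  obtain ⟨m, rfl⟩ := Nat.exists_eq_succ_of_ne_zero (NeZero.ne n)
  rw [Nat.succ_eq_add_one, cycleGraph_eq_circulantGraph]
  exact ⟨Iso.refl⟩

theorem isCycleFactor_comap_bot_boxProd {n : ℕ} [NeZero n] {f : V → ι × ZMod n}
    (hf : Function.Bijective f) :
    IsCycleFactor n
      (((⊥ : SimpleGraph ι) □ circulantGraph ({1} : Set (ZMod n))).comap f) := by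
  obtain ⟨e⟩ := nonempty_circulantGraph_one_iso_cycleGraph n
  have connected : (cycleGraph n).Connected := by
    obtain ⟨m, rfl⟩ := Nat.exists_eq_succ_of_ne_zero (NeZero.ne n)
    exact cycleGraph_connected
  exact (isHFactor_comap_bot_boxProd (e.connected_iff.2 connected) hf).congr e

end Factor

section EdgePartition

variable {V ι κ : Type*} {G G₁ G₂ : SimpleGraph V}

/-- The graphs `F i` partition the edge set of `G`. Empty graphs are allowed among them. -/
def IsEdgePartition (G : SimpleGraph V) (F : ι → SimpleGraph V) : Prop :=
  (∀ i, F i ≤ G) ∧ ∀ ⦃v w⦄, G.Adj v w → ∃! i, (F i).Adj v w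

theorem IsEdgePartition.comp_equiv {F : ι → SimpleGraph V} (hF : IsEdgePartition G F)
    (e : κ ≃ ι) : IsEdgePartition G (F ∘ e) :=
  ⟨fun k ↦ hF.1 (e k), fun _ _ h ↦ e.existsUnique_congr_right.2 (hF.2 h)⟩

theorem IsEdgePartition.sum {F₁ : ι → SimpleGraph V} {F₂ : κ → SimpleGraph V}
    (hF₁ : IsEdgePartition G₁ F₁) (hF₂ : IsEdgePartition G₂ F₂) (hG : Disjoint G₁ G₂) :
    IsEdgePartition (G₁ ⊔ G₂) (Sum.elim F₁ F₂) := by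
  rw [disjoint_left] at hG
  refine ⟨Sum.rec (fun i ↦ (hF₁.1 i).trans le_sup_left) fun k ↦ (hF₂.1 k).trans le_sup_right,
    fun v w h ↦ ?_⟩
  obtain h₁ | h₂ := h
  · obtain ⟨i, hi, unique⟩ := hF₁.2 h₁
    refine ⟨.inl i, hi, Sum.rec (fun j hj ↦ congrArg _ (unique j hj)) fun k hk ↦ ?_⟩
    exact absurd (hF₂.1 k hk) (hG v w h₁)
  · obtain ⟨k, hk, unique⟩ := hF₂.2 h₂
    refine ⟨.inr k, hk, Sum.rec (fun i hi ↦ ?_) fun j hj ↦ congrArg _ (unique j hj)⟩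
    exact absurd h₂ (hG v w (hF₁.1 i hi))

theorem IsEdgePartition.isCycleDecomp [Finite ι] [Finite κ] {m k r s : ℕ}
    {F : ι ⊕ κ → SimpleGraph V} (hF : IsEdgePartition G F)
    (hι : Nat.card ι = r) (hκ : Nat.card κ = s)
    (hm : ∀ i, IsCycleFactor m (F (.inl i))) (hk : ∀ j, IsCycleFactor k (F (.inr j))) :
    IsCycleDecomp G m k r s := by
  let e : Fin r ⊕ Fin s ≃ ι ⊕ κ :=
    (Finite.equivFinOfCardEq hι).symm.sumCongr (Finite.equivFinOfCardEq hκ).symm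
  have hFe := hF.comp_equiv e
  exact ⟨F ∘ e, hFe.1, Sym2.ind fun _ _ h ↦ hFe.2 h, fun i ↦ hm _, fun j ↦ hk _⟩

end EdgePartition

section DifferenceGraph

open scoped Pointwise

variable {A ι κ : Type*} [AddCommGroup A] {S : Set A}

/-- The complete multipartite graph with parts `A × {i}`, for `i : ι`. -/
abbrev completeMultipartite (A ι : Type*) : SimpleGraph (A × ι) :=
  (⊤ : SimpleGraph ι).comap Prod.snd

/-- The edges of `completeMultipartite A ι` between vertices that differ by an element of `S`
in the `A`-coordinate. Edges being unoriented, `S` and `-S` give the same graph. -/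
def differenceGraph (ι : Type*) (S : Set A) : SimpleGraph (A × ι) where
  Adj v w := v.2 ≠ w.2 ∧ w.1 - v.1 ∈ S ∪ -S
  symm := ⟨fun v w h ↦ ⟨h.1.symm, by simpa [or_comm] using h.2⟩⟩
  loopless := ⟨fun _ h ↦ h.1 rfl⟩

theorem differenceGraph_adj (hS : -S = S) {v w : A × ι} :
    (differenceGraph ι S).Adj v w ↔ v.2 ≠ w.2 ∧ w.1 - v.1 ∈ S := by
  simp [differenceGraph, hS]

theorem differenceGraph_sup_compl :
    differenceGraph ι S ⊔ differenceGraph ι Sᶜ = completeMultipartite A ι := by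
  ext v w
  simp only [differenceGraph, sup_adj, comap_adj, top_adj, Set.mem_union, Set.mem_compl_iff]
  tauto

theorem disjoint_differenceGraph_compl (hS : -S = S) :
    Disjoint (differenceGraph ι S) (differenceGraph ι Sᶜ) := by
  have hSc : -Sᶜ = Sᶜ := by rw [Set.compl_neg, hS]
  simp only [disjoint_left, differenceGraph_adj hS, differenceGraph_adj hSc]
  exact fun v w h h' ↦ h'.2 h.2

/-- The `A`-translates of the transversal `{(w i, i) | i : ι}`, each made into a clique. -/
def transversalFactor (w : ι → A) : SimpleGraph (A × ι) :=
  ((⊥ : SimpleGraph A) □ (⊤ : SimpleGraph ι)).comap fun v ↦ (v.1 - w v.2, v.2)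

theorem transversalFactor_adj {w : ι → A} {u v : A × ι} :
    (transversalFactor w).Adj u v ↔ u.2 ≠ v.2 ∧ w v.2 - w u.2 = v.1 - u.1 := by
  simp only [transversalFactor, comap_adj, boxProd_adj, bot_adj, top_adj, false_and, false_or]
  grind

theorem isHFactor_transversalFactor [Nonempty ι] (w : ι → A) :
    IsHFactor (⊤ : SimpleGraph ι) (transversalFactor w) :=
  isHFactor_comap_bot_boxProd connected_top <| Function.bijective_iff_has_inverse.2
    ⟨fun v ↦ (v.1 + w v.2, v.2), fun v ↦ by simp, fun v ↦ by simp⟩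

theorem isEdgePartition_transversalFactor {w : κ → ι → A} (hS : -S = S)
    (hw : ∀ i j, i ≠ j → Set.BijOn (fun k ↦ w k j - w k i) Set.univ S) :
    IsEdgePartition (differenceGraph ι S) fun k ↦ transversalFactor (w k) := by
  refine ⟨fun k u v h ↦ ?_, fun u v h ↦ ?_⟩
  · rw [transversalFactor_adj] at h
    rw [differenceGraph_adj hS, ← h.2]
    exact ⟨h.1, (hw _ _ h.1).mapsTo (Set.mem_univ k)⟩
  · obtain ⟨hne, hmem⟩ := (differenceGraph_adj hS).1 h
    obtain ⟨k, -, hk⟩ := (hw _ _ hne).surjOn hmem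
    refine ⟨k, transversalFactor_adj.2 ⟨hne, hk⟩, fun l hl ↦ ?_⟩
    exact (hw _ _ hne).injOn (Set.mem_univ l) (Set.mem_univ k)
      ((transversalFactor_adj.1 hl).2.trans hk.symm)

theorem isEdgePartition_translates {F : SimpleGraph (A × ι)}
    (hF : F ≤ completeMultipartite A ι)
    (hdiff : ∀ i j, i ≠ j → ∀ d, ∃! x, F.Adj (x, i) (x + d, j)) :
    IsEdgePartition (completeMultipartite A ι) fun t ↦ F.comap fun v ↦ (v.1 - t, v.2) := by
  refine ⟨fun t u v h ↦ @hF (u.1 - t, u.2) (v.1 - t, v.2) h, fun ⟨x, i⟩ ⟨y, j⟩ h ↦ ?_⟩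
  refine ((Equiv.subLeft x).existsUnique_congr fun t ↦ ?_).2 (hdiff i j h (y - x))
  simp

end DifferenceGraph

section IntervalDifferences

open scoped Pointwise

variable {n k : ℕ}

/-- The corners of the triangle with index `t` in `[-k, k]`. Entry `1`, as a function of `t`, is an
orthomorphism of `[-k, k]`: both it and its difference with `t ↦ t` permute the interval. -/
def triangleOffset (k t : ℤ) : ZMod 3 → ℤ :=
  ![0, if 0 < t then 2 * t - 1 - k else 2 * t + k, t]

theorem triangleOffset_zero (k t : ℤ) : triangleOffset k t 0 = 0 := rfl

theorem triangleOffset_one (k t : ℤ) :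
    triangleOffset k t 1 = if 0 < t then 2 * t - 1 - k else 2 * t + k := rfl

theorem triangleOffset_two (k t : ℤ) : triangleOffset k t 2 = t := rfl

theorem bijOn_triangleOffset_sub (k : ℤ) {i j : ZMod 3} (hij : i ≠ j) :
    Set.BijOn (fun t ↦ triangleOffset k t j - triangleOffset k t i)
      (Set.Icc (-k) k) (Set.Icc (-k) k) := by
  have parts (a : ZMod 3) : a = 0 ∨ a = 1 ∨ a = 2 := by decide +revert
  have mapsTo : Set.MapsTo (fun t ↦ triangleOffset k t j - triangleOffset k t i)
      (Set.Icc (-k) k) (Set.Icc (-k) k) := by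
    intro t
    rcases parts i with rfl | rfl | rfl <;> rcases parts j with rfl | rfl | rfl <;>
      grind [triangleOffset_zero, triangleOffset_one, triangleOffset_two]
  refine ((Set.finite_Icc _ _).injOn_iff_bijOn_of_mapsTo mapsTo).1 fun s hs t ht ↦ ?_
  rcases parts i with rfl | rfl | rfl <;> rcases parts j with rfl | rfl | rfl <;>
    grind [triangleOffset_zero, triangleOffset_one, triangleOffset_two]

/-- The residues mod `n` of the integers of absolute value at most `k`. -/
def centralInterval (n k : ℕ) : Set (ZMod n) :=
  Int.cast '' Set.Icc (-k : ℤ) k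

theorem neg_centralInterval : -centralInterval n k = centralInterval n k := by
  ext x
  constructor
  · rintro ⟨t, ht, h⟩
    exact ⟨-t, by grind, by simp [h]⟩
  · rintro ⟨t, ht, rfl⟩
    exact ⟨-t, by grind, by simp⟩

theorem zero_mem_centralInterval : 0 ∈ centralInterval n k :=
  ⟨0, by simp, Int.cast_zero⟩

theorem bijOn_intCast_centralInterval (hk : 2 * k + 1 ≤ n) :
    Set.BijOn Int.cast (Set.Icc (-k : ℤ) k) (centralInterval n k) := by
  refine Set.InjOn.bijOn_image fun s hs t ht h ↦ ?_
  have hdvd := (ZMod.intCast_eq_intCast_iff_dvd_sub s t n).1 h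
  have habs : |t - s| < n := by grind
  linarith [Int.eq_zero_of_abs_lt_dvd hdvd habs]

theorem ncard_Icc_neg_self (k : ℕ) : (Set.Icc (-k : ℤ) k).ncard = 2 * k + 1 := by
  rw [← Finset.coe_Icc, Set.ncard_coe_finset, Int.card_Icc]
  omega

theorem ncard_centralInterval (hk : 2 * k + 1 ≤ n) :
    (centralInterval n k).ncard = 2 * k + 1 := by
  rw [centralInterval, (bijOn_intCast_centralInterval hk).injOn.ncard_image, ncard_Icc_neg_self]

theorem isEdgePartition_triangles (hk : 2 * k + 1 ≤ n) :
    IsEdgePartition (differenceGraph (ZMod 3) (centralInterval n k))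
      fun t : Set.Icc (-k : ℤ) k ↦
        transversalFactor fun i ↦ (triangleOffset k t i : ZMod n) := by
  refine isEdgePartition_transversalFactor neg_centralInterval fun i j hij ↦ ?_
  have bijOn_val : Set.BijOn Subtype.val Set.univ (Set.Icc (-k : ℤ) k) :=
    ⟨fun t _ ↦ t.2, Subtype.val_injective.injOn, fun t ht ↦ ⟨⟨t, ht⟩, trivial, rfl⟩⟩
  simpa [Function.comp_def] using
    ((bijOn_intCast_centralInterval hk).comp (bijOn_triangleOffset_sub k hij)).comp bijOn_val

end IntervalDifferences

section TwistedCycles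

open scoped Pointwise

variable {p : ℕ} [Fact p.Prime] {h : ZMod p → ZMod 3} {u : ZMod p} {S : Set (ZMod p)}

/-- The graph in which `v` and `w` are adjacent when their first coordinates differ by `u` and
their second coordinates differ as the heights `h` of their positions `v.1 / u` and `w.1 / u` on
the cycle `0, u, 2u, …` do: the union of the `p`-cycles `m ↦ (m * u, c + h m)`, for `c : ZMod 3`. -/
def twistedCycleFactor (h : ZMod p → ZMod 3) (u : ZMod p) : SimpleGraph (ZMod p × ZMod 3) :=
  ((⊥ : SimpleGraph (ZMod 3)) □ circulantGraph ({1} : Set (ZMod p))).comap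
    fun v ↦ (v.2 - h (v.1 / u), v.1 / u)

theorem twistedCycleFactor_adj (hu : u ≠ 0) {v w : ZMod p × ZMod 3} :
    (twistedCycleFactor h u).Adj v w ↔
      (w.1 - v.1 = u ∨ w.1 - v.1 = -u) ∧ v.2 - h (v.1 / u) = w.2 - h (w.1 / u) := by
  have div_sub_div_eq_one (x y : ZMod p) : x / u - y / u = 1 ↔ x - y = u := by
    rw [← sub_div, div_eq_one_iff_eq hu]
  simp only [twistedCycleFactor, comap_adj, boxProd_adj, bot_adj, circulantGraph_adj,
    Set.mem_singleton_iff, false_and, false_or, div_sub_div_eq_one]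
  grind

theorem isCycleFactor_twistedCycleFactor (hu : u ≠ 0) :
    IsCycleFactor p (twistedCycleFactor h u) :=
  isCycleFactor_comap_bot_boxProd <| Function.bijective_iff_has_inverse.2
    ⟨fun a ↦ (a.2 * u, a.1 + h a.2), fun v ↦ by simp [hu], fun a ↦ by simp [hu]⟩

theorem zmod_three_sub_eq_sub_iff_add_ne_add {i j a b : ZMod 3} (hij : i ≠ j) (hab : a ≠ b) :
    i - a = j - b ↔ i + a ≠ j + b := by
  decide +revert

theorem div_eq_div_add_one_of_sub_eq {K : Type*} [DivisionRing K] {u x y : K} (hu : u ≠ 0)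
    (hxy : y - x = u) : y / u = x / u + 1 := by
  rw [← div_self hu, ← add_div, ← hxy, add_sub_cancel]

theorem twistedCycleFactor_le_differenceGraph (hu : u ≠ 0) (huS : u ∈ S)
    (hstep : ∀ x, h (x + 1) ≠ h x) :
    twistedCycleFactor h u ≤ differenceGraph (ZMod 3) S := by
  intro v w hvw
  obtain ⟨hdiff, hheight⟩ := (twistedCycleFactor_adj hu).1 hvw
  have height_ne {x y : ZMod p} (hxy : y - x = u) : h (y / u) ≠ h (x / u) :=
    div_eq_div_add_one_of_sub_eq hu hxy ▸ hstep _
  refine ⟨fun hpart ↦ ?_, hdiff.imp (fun hd ↦ by rwa [hd]) fun hd ↦ by simpa [hd]⟩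
  have heq : h (v.1 / u) = h (w.1 / u) := by simpa [hpart] using hheight
  obtain hd | hd := hdiff
  · exact height_ne hd heq.symm
  · exact height_ne (neg_sub w.1 v.1 ▸ neg_eq_iff_eq_neg.2 hd) heq

theorem twistedCycleFactor_adj_iff_not_adj_neg {v w : ZMod p × ZMod 3} (hpart : v.2 ≠ w.2)
    (hu : u ≠ 0) (hvw : w.1 - v.1 = u)
    (hodd : ∀ x, h (-x) = -h x) (hstep : ∀ x, h (x + 1) ≠ h x) :
    (twistedCycleFactor h u).Adj v w ↔ ¬(twistedCycleFactor h (-u)).Adj v w := by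
  have next : w.1 / u = v.1 / u + 1 := div_eq_div_add_one_of_sub_eq hu hvw
  have adj_iff : (twistedCycleFactor h u).Adj v w ↔
      v.2 - h (v.1 / u) = w.2 - h (v.1 / u + 1) := by
    simp only [twistedCycleFactor_adj hu, hvw, next, true_or, true_and]
  have adj_neg_iff : (twistedCycleFactor h (-u)).Adj v w ↔
      v.2 + h (v.1 / u) = w.2 + h (v.1 / u + 1) := by
    simp only [twistedCycleFactor_adj (neg_ne_zero.2 hu), hvw, neg_neg, or_true, true_and,
      div_neg, hodd, next, sub_neg_eq_add]
  rw [adj_iff, adj_neg_iff]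
  exact zmod_three_sub_eq_sub_iff_add_ne_add hpart (hstep _).symm

theorem isEdgePartition_twistedCycleFactor (hS : -S = S) (hS₀ : 0 ∉ S)
    (hodd : ∀ x, h (-x) = -h x) (hstep : ∀ x, h (x + 1) ≠ h x) :
    IsEdgePartition (differenceGraph (ZMod 3) S)
      fun u : S ↦ twistedCycleFactor h u := by
  have ne_zero {u : ZMod p} (hu : u ∈ S) : u ≠ 0 := ne_of_mem_of_not_mem hu hS₀
  refine ⟨fun u ↦ twistedCycleFactor_le_differenceGraph (ne_zero u.2) u.2 hstep,
    fun v w hvw ↦ ?_⟩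
  obtain ⟨hpart, hd⟩ := (differenceGraph_adj hS).1 hvw
  have dichotomy :=
    twistedCycleFactor_adj_iff_not_adj_neg hpart (ne_zero hd) rfl hodd hstep
  set d := w.1 - v.1
  have hneg : -d ∈ S := hS ▸ Set.neg_mem_neg.2 hd
  have candidates (u : S) (hu : (twistedCycleFactor h u).Adj v w) : d = u ∨ d = -u :=
    ((twistedCycleFactor_adj (ne_zero u.2)).1 hu).1
  by_cases hadj : (twistedCycleFactor h d).Adj v w
  · refine ⟨⟨d, hd⟩, hadj, fun u hu ↦ Subtype.ext ?_⟩
    refine (candidates u hu).elim Eq.symm fun hdu ↦ absurd ?_ (dichotomy.1 hadj)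
    rwa [hdu, neg_neg]
  · refine ⟨⟨-d, hneg⟩, not_not.1 (mt dichotomy.2 hadj), fun u hu ↦ Subtype.ext ?_⟩
    refine (candidates u hu).elim (fun hdu ↦ absurd ?_ hadj) neg_eq_iff_eq_neg.2 |>.symm
    rwa [hdu]

end TwistedCycles

section AlternatingHeight

variable {n : ℕ}

/-- The colouring `0, -1, 1, -1, …, -1, 1` of the cycle `ZMod n`. For odd `n > 1` it is a proper
colouring and an odd function, because `x` and `n - x` have opposite parities. -/
def alternatingHeight (x : ZMod n) : ZMod 3 :=
  if x = 0 then 0 else (-1) ^ x.val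

theorem alternatingHeight_neg (hn : Odd n) (x : ZMod n) :
    alternatingHeight (-x) = -alternatingHeight x := by
  have : NeZero n := ⟨hn.pos.ne'⟩
  obtain rfl | hx := eq_or_ne x 0
  · simp [alternatingHeight]
  simp only [alternatingHeight, neg_eq_zero, if_neg hx, ZMod.neg_val]
  obtain heven | hodd := x.val.even_or_odd
  · rw [heven.neg_one_pow, (Nat.Odd.sub_even x.val_le hn heven).neg_one_pow]
  · rw [hodd.neg_one_pow, (hn.tsub_odd hodd).neg_one_pow, neg_neg]

theorem alternatingHeight_add_one_ne (hn : Odd n) (hn₁ : n ≠ 1) (x : ZMod n) :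
    alternatingHeight (x + 1) ≠ alternatingHeight x := by
  have : NeZero n := ⟨hn.pos.ne'⟩
  have : Fact (1 < n) := ⟨by have := hn.pos; omega⟩
  have pow_ne_zero (m : ℕ) : (-1 : ZMod 3) ^ m ≠ 0 := pow_ne_zero m (by decide)
  have neg_ne {a : ZMod 3} (ha : a ≠ 0) : -a ≠ a := by decide +revert
  obtain rfl | hx := eq_or_ne x 0
  · simp [alternatingHeight, ZMod.val_one]
  obtain hx₁ | hx₁ := eq_or_ne (x + 1) 0
  · simpa [alternatingHeight, hx, hx₁] using (pow_ne_zero x.val).symm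
  · have val_lt : x.val + 1 < n := by
      refine lt_of_le_of_ne x.val_lt fun hval ↦ hx₁ ?_
      rw [← ZMod.natCast_zmod_val x, ← Nat.cast_add_one, hval, ZMod.natCast_self]
    have val_succ : (x + 1).val = x.val + 1 := by
      rw [ZMod.val_add_of_lt (by rwa [ZMod.val_one]), ZMod.val_one]
    simpa [alternatingHeight, hx, hx₁, val_succ, pow_succ] using neg_ne (pow_ne_zero x.val)

end AlternatingHeight

section Decompositions

theorem isCycleDecomp_completeMultipartite_prime {p k : ℕ} [Fact p.Prime] (hp : p ≠ 2)
    (hk : 2 * k + 1 ≤ p) :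
    IsCycleDecomp (completeMultipartite (ZMod p) (ZMod 3)) 3 p
      (2 * k + 1) (p - (2 * k + 1)) := by
  have prime : p.Prime := Fact.out
  have odd : Odd p := prime.odd_of_ne_two hp
  have zero_notMem : 0 ∉ (centralInterval p k)ᶜ := fun h ↦ h zero_mem_centralInterval
  have triangle_iso : (⊤ : SimpleGraph (ZMod 3)) ≃g cycleGraph 3 := by
    rw [cycleGraph_three_eq_top]
    exact Iso.refl
  have triangles := isEdgePartition_triangles hk
  have cycles : IsEdgePartition (differenceGraph (ZMod 3) (centralInterval p k)ᶜ)
      fun u : ↥(centralInterval p k)ᶜ ↦ twistedCycleFactor alternatingHeight u :=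
    isEdgePartition_twistedCycleFactor (by rw [Set.compl_neg, neg_centralInterval]) zero_notMem
      (alternatingHeight_neg odd) (alternatingHeight_add_one_ne odd prime.ne_one)
  have all := triangles.sum cycles (disjoint_differenceGraph_compl neg_centralInterval)
  rw [differenceGraph_sup_compl] at all
  refine all.isCycleDecomp ?_ ?_ (fun t ↦ ?_) fun u ↦ ?_
  · rw [Nat.card_coe_set_eq, ncard_Icc_neg_self]
  · rw [Nat.card_coe_set_eq, Set.ncard_compl, Nat.card_zmod, ncard_centralInterval hk]
  · exact (isHFactor_transversalFactor fun i ↦ (triangleOffset k t i : ZMod p)).congr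
      triangle_iso
  · exact isCycleFactor_twistedCycleFactor (ne_of_mem_of_not_mem u.2 zero_notMem)

/-- The vertices of three disjoint `7`-cycles of `K_{7,7,7}`: for each `c`, a cycle indexed by `m`.
The map `(x, i) ↦ (2 * x, i + 1)`, of order `3` because `2 ^ 3 = 1` in `ZMod 7`, sends the cycle `c`
to the cycle `c + 1`. The cycle with `c = 0` was found by a computer search. -/
def baseCycle : ZMod 3 × ZMod 7 → ZMod 7 × ZMod 3 :=
  fun (c, m) ↦ (2 ^ c.val * ![0, 4, 2, 6, 2, 6, 6] m, ![0, 2, 0, 1, 2, 0, 2] m + c)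

theorem baseCycle_bijective : Function.Bijective baseCycle := by
  decide +kernel

/-- The union of the three cycles `baseCycle (c, ·)`. -/
noncomputable def baseFactor : SimpleGraph (ZMod 7 × ZMod 3) :=
  ((⊥ : SimpleGraph (ZMod 3)) □ circulantGraph ({1} : Set (ZMod 7))).comap
    (Equiv.ofBijective baseCycle baseCycle_bijective).symm

theorem baseFactor_adj {v w : ZMod 7 × ZMod 3} :
    baseFactor.Adj v w ↔ ∃ c m, baseCycle (c, m) = v ∧ baseCycle (c, m + 1) = w ∨
      baseCycle (c, m) = w ∧ baseCycle (c, m + 1) = v := by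
  obtain ⟨⟨c, m⟩, rfl⟩ := baseCycle_bijective.surjective v
  obtain ⟨⟨c', m'⟩, rfl⟩ := baseCycle_bijective.surjective w
  have symm_apply (a : ZMod 3 × ZMod 7) :
      (Equiv.ofBijective baseCycle baseCycle_bijective).symm (baseCycle a) = a :=
    Equiv.ofBijective_symm_apply_apply _ _ a
  simp only [baseFactor, comap_adj, symm_apply, boxProd_adj, bot_adj, circulantGraph_adj,
    Set.mem_singleton_iff, baseCycle_bijective.injective.eq_iff, Prod.mk.injEq]
  grind

theorem baseFactor_le : baseFactor ≤ completeMultipartite (ZMod 7) (ZMod 3) := by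
  have snd_ne : ∀ c m, (baseCycle (c, m)).2 ≠ (baseCycle (c, m + 1)).2 := by decide
  intro v w hvw
  obtain ⟨c, m, ⟨rfl, rfl⟩ | ⟨rfl, rfl⟩⟩ := baseFactor_adj.1 hvw
  exacts [snd_ne c m, (snd_ne c m).symm]

theorem existsUnique_baseFactor_adj :
    ∀ i j : ZMod 3, i ≠ j → ∀ d : ZMod 7, ∃! x, baseFactor.Adj (x, i) (x + d, j) := by
  simp only [baseFactor_adj, ExistsUnique]
  decide +kernel

theorem isCycleDecomp_completeMultipartite_seven :
    IsCycleDecomp (completeMultipartite (ZMod 7) (ZMod 3)) 3 7 0 7 := by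
  have translates := isEdgePartition_translates baseFactor_le existsUnique_baseFactor_adj
  refine (translates.comp_equiv (Equiv.emptySum Empty (ZMod 7))).isCycleDecomp
    Nat.card_of_isEmpty (Nat.card_zmod 7) Empty.rec fun t ↦ ?_
  exact isCycleFactor_comap_bot_boxProd <|
    (Equiv.bijective _).comp ((Equiv.subRight t).prodCongr (Equiv.refl _)).bijective

end Decompositions

/-- Lemma 2.7: `(K_{7,7,7}; C₃^α, C₇^β)` exists for `α ∈ {0,1,3,5,7}` with `α + β = 7`. -/
theorem K777_cycle_decomp (α β : ℕ) (hα : α ∈ ({0, 1, 3, 5, 7} : Set ℕ))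
    (hαβ : α + β = 7) :
    IsCycleDecomp K777 3 7 α β := by
  change IsCycleDecomp (completeMultipartite (ZMod 7) (ZMod 3)) 3 7 α β
  have : Fact (Nat.Prime 7) := ⟨by norm_num⟩
  obtain rfl : β = 7 - α := by omega
  obtain rfl | ⟨k, rfl⟩ : α = 0 ∨ Odd α := by
    rcases hα with rfl | rfl | rfl | rfl | rfl <;> decide
  · exact isCycleDecomp_completeMultipartite_seven
  · exact isCycleDecomp_completeMultipartite_prime (by norm_num) (by omega)
end

section
/- Let t ≥ 0 and n = 42t + 21. The edge set of the complete graph K_n can be partitioned into 3t K_{7,7,7}-factors and one K₂₁-factor; that is, (K_n; K_{7,7,7}^{3t}, K₂₁) exists. -/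
open SimpleGraph

/-- A partition of the edge set of `G` into `a` `H₁`-factors and `b` `H₂`-factors,
denoted `(G; H₁^a, H₂^b)`. -/
def IsFactorDecomp {V W₁ W₂ : Type*} (G : SimpleGraph V)
    (H₁ : SimpleGraph W₁) (H₂ : SimpleGraph W₂) (a b : ℕ) : Prop :=
  ∃ F : Fin a ⊕ Fin b → SimpleGraph V,
    (∀ i, F i ≤ G) ∧
    (∀ e ∈ G.edgeSet, ∃! i, e ∈ (F i).edgeSet) ∧
    (∀ i : Fin a, IsHFactor H₁ (F (Sum.inl i))) ∧
    (∀ j : Fin b, IsHFactor H₂ (F (Sum.inr j)))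

/-!
Replacing each point of a Kirkman triple system on `6t + 3` points by seven vertices turns every
parallel class into a `K_{7,7,7}`-factor, and one of the `3t + 1` classes becomes a `K₂₁`-factor
when the edges over single points are added to it. So the theorem rests on the existence of Kirkman
triple systems for all `t` (Ray-Chaudhuri and Wilson).

Wilson's construction supplies the recursion. Giving weight six to the points of a group divisible
design with blocks of size four and five, and putting uniform Kirkman frames on the blocks, yields
a Kirkman frame; its holes are filled by smaller systems that share one triple. Truncated
transversal designs thereby produce the system for `4m + u` from those for `m` and `u ≤ m`, when
`m ≥ 4` is a prime power or `m` is prime to six. The finitely many remaining `t` come from finite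
fields, from tripling `2t + 1`, from a frame with eleven groups, and from a design with nine groups.
-/

/-- The points `p` and `q` are consecutive in a cycle of `s`. When every cycle of `s` has length
three, this says that `p` and `q` lie in a common triple. -/
def Linked {P : Type*} (s : P → P) (p q : P) : Prop :=
  s p = q ∨ s q = p

/-- Kirkman triple systems with points `P` and parallel classes `C`, encoded by rotations: `r c`
permutes each triple of the class `c` cyclically, and any two points lie in a common triple. The
triple is unique only for the right number of classes, see `IsKirkman.linked_unique`. -/
structure IsKirkman {P C : Type*} (r : C → P → P) : Prop where
  iterate_three : ∀ c p, r c (r c (r c p)) = p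
  exists_linked : ∀ p q, p ≠ q → ∃ c, Linked (r c) p q

/-- Kirkman frames with groups indexed by `X`: the partial parallel class `c` consists of triples
that partition the points outside the group `gc c`, and two points of different groups lie in a
common triple. Values of `r c` on the group `gc c` are irrelevant. -/
structure IsKirkmanFrame {P C X : Type*} (gp : P → X) (gc : C → X) (r : C → P → P) : Prop where
  off_hole : ∀ c p, gp p ≠ gc c → gp (r c p) ≠ gc c
  iterate_three : ∀ c p, gp p ≠ gc c → r c (r c (r c p)) = p
  exists_linked : ∀ p q, gp p ≠ gp q →
    ∃ c, gp p ≠ gc c ∧ gp q ≠ gc c ∧ Linked (r c) p q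

/-- Existence of a Kirkman triple system on `6 * t + 3` points. -/
def HasKirkmanSystem (t : ℕ) : Prop :=
  ∃ r : Fin (3 * t + 1) → Fin (6 * t + 3) → Fin (6 * t + 3), IsKirkman r

/-- Existence of a Kirkman frame whose groups are indexed by `X`, each group being a copy of `I`
and missed by a copy of `J` many partial parallel classes. -/
def HasUniformFrame (X I J : Type*) : Prop :=
  ∃ r : X × J → X × I → X × I, IsKirkmanFrame Prod.fst Prod.fst r

theorem Linked.symm {P : Type*} {s : P → P} {p q : P} (h : Linked s p q) : Linked s q p :=
  Or.symm h

theorem Linked.conj {P P' : Type*} {s : P → P} {p q : P'} (e : P ≃ P')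
    (h : Linked s (e.symm p) (e.symm q)) : Linked (fun x => e (s (e.symm x))) p q :=
  h.imp (fun h => by simp only [h, e.apply_symm_apply]) fun h => by
    simp only [h, e.apply_symm_apply]

section Transport

variable {P C P' C' X X' : Type*}

theorem IsKirkman.transport {r : C → P → P} (h : IsKirkman r) (e : P ≃ P') (f : C' ≃ C) :
    IsKirkman fun c p => e (r (f c) (e.symm p)) where
  iterate_three c p := by simp only [e.symm_apply_apply, h.iterate_three, e.apply_symm_apply]
  exists_linked p q hpq := by
    obtain ⟨c, hc⟩ := h.exists_linked _ _ (e.symm.injective.ne hpq)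
    refine ⟨f.symm c, ?_⟩
    simpa only [f.apply_symm_apply] using hc.conj e

theorem IsKirkman.hasKirkmanSystem {r : C → P → P} (h : IsKirkman r) {t : ℕ}
    (hP : Nat.card P = 6 * t + 3) (hC : Nat.card C = 3 * t + 1) : HasKirkmanSystem t :=
  have := Nat.finite_of_card_ne_zero (hP.trans_ne (by lia))
  have := Nat.finite_of_card_ne_zero (hC.trans_ne (by lia))
  ⟨_, h.transport (Finite.equivFinOfCardEq hP) (Finite.equivFinOfCardEq hC).symm⟩

theorem IsKirkmanFrame.transport {gp : P → X} {gc : C → X} {r : C → P → P}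
    (h : IsKirkmanFrame gp gc r) (e : P ≃ P') (f : C' ≃ C) (x : X ≃ X') :
    IsKirkmanFrame (fun p => x (gp (e.symm p))) (fun c => x (gc (f c)))
      fun c p => e (r (f c) (e.symm p)) where
  off_hole c p hp := by
    simpa only [e.symm_apply_apply] using x.injective.ne (h.off_hole _ _ fun hx => hp (by rw [hx]))
  iterate_three c p hp := by
    simp only [e.symm_apply_apply, h.iterate_three _ _ fun hx => hp (by rw [hx]),
      e.apply_symm_apply]
  exists_linked p q hpq := by
    obtain ⟨c, hpc, hqc, hc⟩ := h.exists_linked _ _ fun hx => hpq (by rw [hx])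
    refine ⟨f.symm c, ?_⟩
    simpa only [f.apply_symm_apply, ne_eq, x.injective.eq_iff] using ⟨hpc, hqc, hc.conj e⟩

theorem HasUniformFrame.congr {I J I' J' : Type*} (h : HasUniformFrame X I J) (x : X ≃ X')
    (i : I ≃ I') (j : J ≃ J') : HasUniformFrame X' I' J' := by
  obtain ⟨r, hr⟩ := h
  have := hr.transport (x.prodCongr i) (x.prodCongr j).symm x
  simp only [Equiv.prodCongr_symm, Equiv.prodCongr_apply, Prod.map_fst,
    Equiv.apply_symm_apply] at this
  exact ⟨_, this⟩

theorem IsKirkmanFrame.hasUniformFrame {I J : Type*} {gp : P → X} {gc : C → X} {r : C → P → P}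
    (h : IsKirkmanFrame gp gc r) (eP : ∀ x, {p // gp p = x} ≃ I) (eC : ∀ x, {c // gc c = x} ≃ J) :
    HasUniformFrame X I J := by
  let fP : P ≃ X × I := (Equiv.sigmaFiberEquiv gp).symm.trans
    ((Equiv.sigmaCongrRight eP).trans (Equiv.sigmaEquivProd X I))
  let fC : C ≃ X × J := (Equiv.sigmaFiberEquiv gc).symm.trans
    ((Equiv.sigmaCongrRight eC).trans (Equiv.sigmaEquivProd X J))
  have hfP (x) : gp (fP.symm x) = x.1 := congrArg Prod.fst (fP.apply_symm_apply x)
  have hfC (x) : gc (fC.symm x) = x.1 := congrArg Prod.fst (fC.apply_symm_apply x)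
  have := h.transport fP fC.symm (Equiv.refl X)
  simp only [hfP, hfC, Equiv.refl_apply] at this
  exact ⟨_, this⟩

end Transport

section Counting

variable {P C : Type*}

/-- The point `p` together with its two companions in each parallel class of a Kirkman triple
system. -/
def star (r : C → P → P) (p : P) : Option (C × Bool) → P
  | none => p
  | some (c, true) => r c p
  | some (c, false) => r c (r c p)

namespace IsKirkman

variable {r : C → P → P}

theorem star_of_linked (h : IsKirkman r) {c : C} {p q : P} (hc : Linked (r c) p q) :
    ∃ b, star r p (some (c, b)) = q := by
  rcases hc with rfl | rfl
  exacts [⟨true, rfl⟩, ⟨false, h.iterate_three c q⟩]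

theorem star_surjective (h : IsKirkman r) (p : P) : Function.Surjective (star r p) := by
  intro q
  rcases eq_or_ne p q with rfl | hpq
  · exact ⟨none, rfl⟩
  · obtain ⟨c, hc⟩ := h.exists_linked p q hpq
    exact (h.star_of_linked hc).imp' (fun b => some (c, b)) fun _ => id

variable [Finite C]

theorem star_injective (h : IsKirkman r) (hcard : Nat.card P = 2 * Nat.card C + 1) (p : P) :
    Function.Injective (star r p) := by
  refine ((h.star_surjective p).bijective_of_nat_card_le ?_).injective
  rw [Finite.card_option, Nat.card_prod, Nat.card_eq_fintype_card (α := Bool), Fintype.card_bool]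
  lia

theorem rotation_ne (h : IsKirkman r) (hcard : Nat.card P = 2 * Nat.card C + 1) (c : C) (p : P) :
    r c p ≠ p := fun hp =>
  Option.some_ne_none _ (h.star_injective hcard p (a₁ := some (c, true)) (a₂ := none) hp)

theorem linked_unique (h : IsKirkman r) (hcard : Nat.card P = 2 * Nat.card C + 1) {c c' : C}
    {p q : P} (hc : Linked (r c) p q) (hc' : Linked (r c') p q) : c = c' := by
  obtain ⟨b, hb⟩ := h.star_of_linked hc
  obtain ⟨b', hb'⟩ := h.star_of_linked hc'
  exact congrArg Prod.fst (Option.some_injective _ (h.star_injective hcard p (hb.trans hb'.symm)))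

end IsKirkman

end Counting

section Triples

variable {P : Type*} {s : P → P}

/-- The cycle of `s` through `p`, parametrized cyclically when `s` has order three. -/
def tripleAt (s : P → P) (p : P) (i : ZMod 3) : P :=
  s^[i.val] p

theorem injective_of_iterate_three (h3 : ∀ p, s (s (s p)) = p) : Function.Injective s :=
  Function.LeftInverse.injective (g := s ∘ s) h3

theorem tripleAt_add_one (h3 : ∀ p, s (s (s p)) = p) (p : P) (i : ZMod 3) :
    tripleAt s p (i + 1) = s (tripleAt s p i) := by
  match i with
  | 0 => rfl
  | 1 => rfl
  | 2 => exact (h3 p).symm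

theorem zmod_three_eq_add_one_or {i j : ZMod 3} (hij : i ≠ j) : j = i + 1 ∨ i = j + 1 := by
  decide +revert

theorem linked_tripleAt (h3 : ∀ p, s (s (s p)) = p) (p : P) {i j : ZMod 3} (hij : i ≠ j) :
    Linked s (tripleAt s p i) (tripleAt s p j) := by
  rcases zmod_three_eq_add_one_or hij with rfl | rfl
  exacts [.inl (tripleAt_add_one h3 p _).symm, .inr (tripleAt_add_one h3 p _).symm]

theorem tripleAt_injective (h3 : ∀ p, s (s (s p)) = p) (hne : ∀ p, s p ≠ p) (p : P) :
    Function.Injective (tripleAt s p) := by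
  intro i j hij
  by_contra h
  rcases linked_tripleAt h3 p h with h | h
  exacts [hne _ (h.trans hij.symm), hne _ (h.trans hij)]

theorem mem_range_tripleAt_of_linked (h3 : ∀ p, s (s (s p)) = p) {p q : P} {i : ZMod 3}
    (h : Linked s (tripleAt s p i) q) : q ∈ Set.range (tripleAt s p) := by
  rcases h with h | h
  · exact ⟨i + 1, (tripleAt_add_one h3 p i).trans h⟩
  · refine ⟨i - 1, injective_of_iterate_three h3 ?_⟩
    rw [h, ← tripleAt_add_one h3, sub_add_cancel]

end Triples

section Fill

variable {P C X Z D : Type*}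

/-- The group of `x` together with the extra elements `Z`, inside all elements and `Z`. -/
def groupInclusion (g : P → X) (x : X) : {p // g p = x} ⊕ Z → P ⊕ Z :=
  Sum.map Subtype.val id

open Classical in
/-- Filling the holes of a frame `r` on `P` by systems `N x` on the groups extended by `Z`: the
class `c` of the frame is completed on its hole by a class of `N (gc c)`, and the extra classes `D`
of all the systems, which agree with `z` on `Z`, are glued along `Z`. -/
noncomputable def fillRotation (gp : P → X) (gc : C → X) (r : C → P → P)
    (N : ∀ x, {c // gc c = x} ⊕ D → {p // gp p = x} ⊕ Z → {p // gp p = x} ⊕ Z) (z : D → Z → Z) :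
    C ⊕ D → P ⊕ Z → P ⊕ Z
  | .inl c, .inl p =>
    if h : gp p = gc c then groupInclusion gp _ (N (gc c) (.inl ⟨c, rfl⟩) (.inl ⟨p, h⟩))
    else .inl (r c p)
  | .inl c, .inr y => groupInclusion gp _ (N (gc c) (.inl ⟨c, rfl⟩) (.inr y))
  | .inr d, .inl p => groupInclusion gp _ (N (gp p) (.inr d) (.inl ⟨p, rfl⟩))
  | .inr d, .inr y => .inr (z d y)

variable {gp : P → X} {gc : C → X} {r : C → P → P}
  {N : ∀ x, {c // gc c = x} ⊕ D → {p // gp p = x} ⊕ Z → {p // gp p = x} ⊕ Z} {z : D → Z → Z}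

theorem groupInclusion_injective (g : P → X) (x : X) :
    Function.Injective (groupInclusion (Z := Z) g x) :=
  Sum.map_injective.2 ⟨Subtype.val_injective, Function.injective_id⟩

theorem exists_groupInclusion_eq_pair [Nonempty X] (gp : P → X) (p q : P ⊕ Z) :
    (∃ x p' q', groupInclusion gp x p' = p ∧ groupInclusion gp x q' = q) ∨
      ∃ p' q', gp p' ≠ gp q' ∧ Sum.inl p' = p ∧ Sum.inl q' = q := by
  rcases p with p | y <;> rcases q with q | y'
  · rcases eq_or_ne (gp p) (gp q) with h | h
    exacts [.inl ⟨gp q, .inl ⟨p, h⟩, .inl ⟨q, rfl⟩, rfl, rfl⟩, .inr ⟨p, q, h, rfl, rfl⟩]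
  · exact .inl ⟨gp p, .inl ⟨p, rfl⟩, .inr y', rfl, rfl⟩
  · exact .inl ⟨gp q, .inr y, .inl ⟨q, rfl⟩, rfl, rfl⟩
  · exact .inl ⟨Classical.arbitrary X, .inr y, .inr y', rfl, rfl⟩

theorem fillRotation_inl_of_ne {c : C} {p : P} (h : gp p ≠ gc c) :
    fillRotation gp gc r N z (.inl c) (.inl p) = .inl (r c p) :=
  dif_neg h

theorem fillRotation_groupInclusion (hz : ∀ x d y, N x (.inr d) (.inr y) = .inr (z d y)) (x : X)
    (c : {c // gc c = x} ⊕ D) (p : {p // gp p = x} ⊕ Z) :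
    fillRotation gp gc r N z (groupInclusion gc x c) (groupInclusion gp x p) =
      groupInclusion gp x (N x c p) := by
  rcases c with ⟨c, rfl⟩ | d
  · rcases p with ⟨p, hp⟩ | y
    exacts [dif_pos hp, rfl]
  · rcases p with ⟨p, rfl⟩ | y
    exacts [rfl, (congrArg (groupInclusion gp x) (hz x d y)).symm]

theorem IsKirkmanFrame.isKirkman_fillRotation [Nonempty X] (h : IsKirkmanFrame gp gc r)
    (hN : ∀ x, IsKirkman (N x)) (hz : ∀ x d y, N x (.inr d) (.inr y) = .inr (z d y)) :
    IsKirkman (fillRotation gp gc r N z) where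
  iterate_three c p := by
    have on_group (x c p) : let s := fillRotation gp gc r N z (groupInclusion gc x c)
        s (s (s (groupInclusion gp x p))) = groupInclusion gp x p := by
      simp only [fillRotation_groupInclusion hz, (hN x).iterate_three]
    rcases c with c | d <;> rcases p with p | y
    · by_cases hp : gp p = gc c
      · exact on_group (gc c) (.inl ⟨c, rfl⟩) (.inl ⟨p, hp⟩)
      · have hp' := h.off_hole c p hp
        rw [fillRotation_inl_of_ne hp, fillRotation_inl_of_ne hp',
          fillRotation_inl_of_ne (h.off_hole c _ hp'), h.iterate_three c p hp]
    · exact on_group (gc c) (.inl ⟨c, rfl⟩) (.inr y)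
    · exact on_group (gp p) (.inr d) (.inl ⟨p, rfl⟩)
    · exact on_group (Classical.arbitrary X) (.inr d) (.inr y)
  exists_linked p q hpq := by
    rcases exists_groupInclusion_eq_pair gp p q with ⟨x, p, q, rfl, rfl⟩ | ⟨p, q, hg, rfl, rfl⟩
    · obtain ⟨c, hc⟩ := (hN x).exists_linked p q (ne_of_apply_ne _ hpq)
      refine ⟨groupInclusion gc x c, ?_⟩
      simpa only [Linked, fillRotation_groupInclusion hz,
        (groupInclusion_injective gp x).eq_iff] using hc
    · obtain ⟨c, hp, hq, hc⟩ := h.exists_linked p q hg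
      refine ⟨.inl c, ?_⟩
      simpa only [Linked, fillRotation_inl_of_ne hp, fillRotation_inl_of_ne hq,
        Sum.inl.injEq] using hc

end Fill

theorem exists_equiv_sum_of_injective {S P Z : Type*} [Finite S] [Finite P] {f : Z → S}
    (hf : Function.Injective f) (hcard : Nat.card S = Nat.card P + Nat.card Z) :
    ∃ e : S ≃ P ⊕ Z, ∀ z, e (f z) = .inr z := by
  classical
  have := Finite.of_injective f hf
  let i : Z ≃ Set.range f := Equiv.ofInjective f hf
  have hS := Nat.card_congr (Equiv.Set.sumCompl (Set.range f))
  rw [Nat.card_sum, ← Nat.card_congr i] at hS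
  obtain ⟨k⟩ : Nonempty (↑(Set.range f)ᶜ ≃ P) := Finite.card_eq.1 (by lia)
  refine ⟨(Equiv.Set.sumCompl (Set.range f)).symm.trans
    ((Equiv.sumComm _ _).trans (k.sumCongr i.symm)), fun z => ?_⟩
  have hz : (Equiv.Set.sumCompl (Set.range f)).symm (f z) = .inl (i z) :=
    Equiv.Set.sumCompl_symm_apply_of_mem (Set.mem_range_self z)
  simp only [Equiv.trans_apply, hz, Equiv.sumComm_apply, Sum.swap_inl, Equiv.sumCongr_apply,
    Sum.map_inr, Equiv.symm_apply_apply]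

theorem isKirkman_add_one {C : Type*} [Nonempty C] :
    IsKirkman fun (_ : C) (z : ZMod 3) => z + 1 where
  iterate_three _ := by decide
  exists_linked p q hpq :=
    ⟨Classical.arbitrary C, (zmod_three_eq_add_one_or hpq).imp Eq.symm Eq.symm⟩

theorem hasKirkmanSystem_zero : HasKirkmanSystem 0 :=
  (isKirkman_add_one (C := Unit)).hasKirkmanSystem (Nat.card_zmod 3) Nat.card_unique

theorem HasKirkmanSystem.exists_normalized {t : ℕ} (h : HasKirkmanSystem t) {P C : Type*}
    [Finite P] [Finite C] (hP : Nat.card P = 6 * t) (hC : Nat.card C = 3 * t) :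
    ∃ r : C ⊕ Unit → P ⊕ ZMod 3 → P ⊕ ZMod 3,
      IsKirkman r ∧ ∀ z, r (.inr ()) (.inr z) = .inr (z + 1) := by
  obtain ⟨r, hr⟩ := h
  have hne : ∀ p, r 0 p ≠ p := hr.rotation_ne (by simp only [Nat.card_fin]; lia) 0
  obtain ⟨e, he⟩ := exists_equiv_sum_of_injective (P := P)
    (tripleAt_injective (hr.iterate_three 0) hne 0) (by rw [Nat.card_fin, Nat.card_zmod, hP])
  obtain ⟨f, hf⟩ := exists_equiv_sum_of_injective (P := C) (Z := Unit) (S := Fin (3 * t + 1))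
    (f := fun _ => 0) (Function.injective_of_subsingleton _)
    (by rw [Nat.card_fin, hC, Nat.card_unique])
  refine ⟨_, hr.transport e f.symm, fun z => ?_⟩
  simp only [← he, ← hf, Equiv.symm_apply_apply, ← tripleAt_add_one (hr.iterate_three 0)]

theorem card_fiber_fst {X Γ : Type*} (K : Type*) (g : X → Γ) (γ : Γ) :
    Nat.card {p : X × K // g p.1 = γ} = Nat.card {x // g x = γ} * Nat.card K :=
  (Nat.card_congr (Equiv.prodSubtypeFstEquivSubtypeProd (p := (g · = γ)))).trans (Nat.card_prod _ _)

theorem IsKirkmanFrame.hasKirkmanSystem_of_fiber {X Γ I J : Type*} [Finite X] {g : X → Γ}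
    {r : X × J → X × I → X × I}
    (h : IsKirkmanFrame (fun p => g p.1) (fun c => g c.1) r) (hI : Nat.card I = 6)
    (hJ : Nat.card J = 3) (hΓ : ∀ γ, HasKirkmanSystem (Nat.card {x // g x = γ})) :
    HasKirkmanSystem (Nat.card X) := by
  have := Nat.finite_of_card_ne_zero (hI.trans_ne (by lia))
  have := Nat.finite_of_card_ne_zero (hJ.trans_ne (by lia))
  rcases isEmpty_or_nonempty X with _ | ⟨⟨x⟩⟩
  · simpa only [Nat.card_of_isEmpty] using hasKirkmanSystem_zero
  have : Nonempty Γ := ⟨g x⟩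
  choose N hN hz using fun γ => (hΓ γ).exists_normalized
    (P := {p : X × I // g p.1 = γ}) (C := {c : X × J // g c.1 = γ})
    (by rw [card_fiber_fst, hI, mul_comm]) (by rw [card_fiber_fst, hJ, mul_comm])
  refine (h.isKirkman_fillRotation (z := fun _ z => z + 1) hN
    fun γ _ => hz γ).hasKirkmanSystem ?_ ?_
  · rw [Nat.card_sum, Nat.card_prod, hI, Nat.card_zmod, mul_comm]
  · rw [Nat.card_sum, Nat.card_prod, hJ, Nat.card_unique (α := Unit), mul_comm]

theorem IsKirkmanFrame.hasKirkmanSystem_of_two {X I : Type*} {r : X → X × I → X × I} {t : ℕ}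
    (h : IsKirkmanFrame Prod.fst id r) (hI : Nat.card I = 2) (hX : Nat.card X = 3 * t + 1) :
    HasKirkmanSystem t := by
  have := Nat.finite_of_card_ne_zero (hI.trans_ne (by lia))
  have := Nat.finite_of_card_ne_zero (hX.trans_ne (by lia))
  have : Nonempty X := (Nat.card_pos_iff.1 (by lia)).1
  have hfill (x : X) : ∃ N : {c // id c = x} ⊕ Empty → {p : X × I // p.1 = x} ⊕ Unit →
      {p : X × I // p.1 = x} ⊕ Unit, IsKirkman N := by
    have hx : Nat.card {p : X × I // p.1 = x} = 2 := by
      rw [card_fiber_fst I (·) x, hI, Nat.card_unique]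
    obtain ⟨e⟩ : Nonempty (ZMod 3 ≃ {p : X × I // p.1 = x} ⊕ Unit) :=
      Finite.card_eq.1 (by rw [Nat.card_sum, hx, Nat.card_zmod, Nat.card_unique])
    have : Nonempty ({c // id c = x} ⊕ Empty) := ⟨.inl ⟨x, rfl⟩⟩
    exact ⟨_, isKirkman_add_one.transport e (Equiv.refl _)⟩
  choose N hN using hfill
  refine (h.isKirkman_fillRotation (z := Empty.elim) hN fun _ d => d.elim).hasKirkmanSystem ?_ ?_
  · rw [Nat.card_sum, Nat.card_prod, hI, hX, Nat.card_unique]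
    lia
  · rw [Nat.card_sum, hX, Nat.card_of_isEmpty]

section Tripling

variable {G : Type*} [AddCommGroup G]

/-- The rotation of `G × ZMod 3` taking level `i` to level `i + 1` by adding `w i`. -/
def levelShift (w : ZMod 3 → G) (p : G × ZMod 3) : G × ZMod 3 :=
  (p.1 + w p.2, p.2 + 1)

theorem levelShift_iterate_three {w : ZMod 3 → G} (hw : w 0 + w 1 + w 2 = 0) (p : G × ZMod 3) :
    levelShift w (levelShift w (levelShift w p)) = p := by
  obtain ⟨x, i⟩ := p
  have sum_eq : w i + w (i + 1) + w (i + 1 + 1) = w 0 + w 1 + w 2 := by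
    match i with
    | 0 => rfl
    | 1 => exact (add_rotate (w 0) (w 1) (w 2)).symm
    | 2 => exact add_rotate (w 2) (w 0) (w 1)
  have level_eq : ∀ i : ZMod 3, i + 1 + 1 + 1 = i := by decide
  refine Prod.ext ?_ (level_eq i)
  calc x + w i + w (i + 1) + w (i + 1 + 1) = x + (w i + w (i + 1) + w (i + 1 + 1)) := by abel
    _ = x := by rw [sum_eq, hw, add_zero]

theorem IsKirkman.triple {C : Type*} {r : C → G → G} (h : IsKirkman r)
    (half : ∀ x : G, ∃ d, d + d = x) :
    IsKirkman (Sum.elim (fun c p => (r c p.1, p.2)) fun d => levelShift ![d, d, -(d + d)] :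
      C ⊕ G → G × ZMod 3 → G × ZMod 3) where
  iterate_three
    | .inl c, p => Prod.ext (h.iterate_three c p.1) rfl
    | .inr d, p => levelShift_iterate_three (add_neg_cancel (d + d)) p
  exists_linked := by
    have exists_shift (x y : G) (i : ZMod 3) : ∃ d, x + ![d, d, -(d + d)] i = y := by
      obtain ⟨d, hd⟩ := half (x - y)
      match i with
      | 0 | 1 => exact ⟨y - x, add_sub_cancel x y⟩
      | 2 => exact ⟨d, by simp [hd]⟩
    rintro ⟨x, i⟩ ⟨y, j⟩ hpq
    rcases eq_or_ne i j with rfl | hij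
    · obtain ⟨c, hc⟩ := h.exists_linked x y (ne_of_apply_ne (·, i) hpq)
      exact ⟨.inl c, hc.imp (congrArg (·, i)) (congrArg (·, i))⟩
    · rcases zmod_three_eq_add_one_or hij with rfl | rfl
      · obtain ⟨d, rfl⟩ := exists_shift x y i
        exact ⟨.inr d, .inl rfl⟩
      · obtain ⟨d, rfl⟩ := exists_shift y x j
        exact ⟨.inr d, .inr rfl⟩

theorem HasKirkmanSystem.three_mul_add_one {t : ℕ} (h : HasKirkmanSystem t) :
    HasKirkmanSystem (3 * t + 1) := by
  obtain ⟨r, hr⟩ := h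
  have half (x : ZMod (6 * t + 3)) : ∃ d, d + d = x := by
    have hn : (6 * t + 3 : ZMod (6 * t + 3)) = 0 := by
      exact_mod_cast ZMod.natCast_self (6 * t + 3)
    exact ⟨(3 * t + 2) * x, by linear_combination x * hn⟩
  have e := (Finite.equivFinOfCardEq (Nat.card_zmod (6 * t + 3))).symm
  refine ((hr.transport e (Equiv.refl _)).triple half).hasKirkmanSystem ?_ ?_
  · rw [Nat.card_prod, Nat.card_zmod, Nat.card_zmod]
    lia
  · rw [Nat.card_sum, Nat.card_fin, Nat.card_zmod]
    lia

end Tripling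

section Development

variable {G Q I : Type*} [AddCommGroup G] [AddCommGroup Q]

/-- A starter for a Kirkman frame with points `G × I` whose groups are the fibres of `q`: a partial
parallel class missing the zero group, whose translates by `G` cover all pairs of points of
different groups. -/
structure IsFrameStarter (q : G →+ Q) (s : G × I → G × I) : Prop where
  off_hole : ∀ p, q p.1 ≠ 0 → q (s p).1 ≠ 0
  iterate_three : ∀ p, q p.1 ≠ 0 → s (s (s p)) = p
  exists_linked : ∀ d i j, q d ≠ 0 →
    ∃ x, q x ≠ 0 ∧ q (x + d) ≠ 0 ∧ Linked s (x, i) (x + d, j)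

/-- The translate by `c` of a map on `G × I`. -/
def develop (s : G × I → G × I) (c : G) (p : G × I) : G × I :=
  ((s (p.1 - c, p.2)).1 + c, (s (p.1 - c, p.2)).2)

theorem develop_develop (s s' : G × I → G × I) (c : G) (p : G × I) :
    develop s c (develop s' c p) = develop (s ∘ s') c p := by
  simp only [develop, add_sub_cancel_right, Function.comp_apply]

theorem develop_of_eq {s : G × I → G × I} {c : G} {p : G × I}
    (h : s (p.1 - c, p.2) = (p.1 - c, p.2)) : develop s c p = p := by
  simp only [develop, h, sub_add_cancel]

theorem Linked.develop {s : G × I → G × I} {x y : G} {i j : I} (h : Linked s (x, i) (y, j))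
    (c : G) : Linked (develop s c) (x + c, i) (y + c, j) := by
  simpa only [Linked, _root_.develop, add_sub_cancel_right, Prod.ext_iff, add_left_inj] using h

theorem IsFrameStarter.isKirkmanFrame {q : G →+ Q} {s : G × I → G × I} (h : IsFrameStarter q s) :
    IsKirkmanFrame (fun p => q p.1) q (develop s) where
  off_hole c p hp := by
    have := h.off_hole (p.1 - c, p.2) (by rwa [map_sub, sub_ne_zero])
    rwa [develop, map_add, ne_eq, add_eq_right]
  iterate_three c p hp := by
    rw [develop_develop, develop_develop]
    exact develop_of_eq (h.iterate_three _ (by rwa [map_sub, sub_ne_zero]))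
  exists_linked := by
    rintro ⟨a, i⟩ ⟨b, j⟩ hab
    obtain ⟨x, hx, hxd, hl⟩ := h.exists_linked (b - a) i j (by rwa [map_sub, sub_ne_zero, ne_comm])
    refine ⟨a - x, ?_, ?_, ?_⟩
    · simpa only [map_sub, ne_eq, eq_sub_iff_add_eq, add_eq_left] using hx
    · rw [← sub_ne_zero, ← map_sub]
      convert hxd using 2
      abel
    · convert hl.develop (a - x) using 2 <;> abel

theorem IsFrameStarter.hasUniformFrame {q : G →+ Q} {s : G × I → G × I} (h : IsFrameStarter q s)
    (hq : Function.Surjective q) : HasUniformFrame Q (q.ker × I) q.ker :=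
  h.isKirkmanFrame.hasUniformFrame
    (fun x => Equiv.prodSubtypeFstEquivSubtypeProd.trans
      ((AddMonoidHom.fiberEquivKerOfSurjective hq x).prodCongr (Equiv.refl I)))
    fun x => AddMonoidHom.fiberEquivKerOfSurjective hq x

end Development

section HalfSystem

variable {F : Type*} [Field F] {ζ : F} {S : Set F}

/-- `S` contains exactly one of `x` and `-x` for every `x ≠ 0`, and is a union of orbits of the
multiplication by `ζ`. -/
structure IsHalfSystem (ζ : F) (S : Set F) : Prop where
  zero_notMem : 0 ∉ S
  neg_mem_iff : ∀ x, x ≠ 0 → (-x ∈ S ↔ x ∉ S)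
  mul_mem_iff : ∀ x, ζ * x ∈ S ↔ x ∈ S

theorem exists_isHalfSystem [Finite F] (h2 : (2 : F) ≠ 0) (hζ : ζ ^ 3 = 1) :
    ∃ S, IsHalfSystem ζ S := by
  let e := Finite.equivFin F
  refine ⟨{x | e (x ^ 3) < e ((-x) ^ 3)}, ⟨?_, fun x hx => ?_, fun x => ?_⟩⟩
  · simp only [Set.mem_ofPred_eq, neg_zero, lt_irrefl, not_false_eq_true]
  · have hne : x ^ 3 ≠ (-x) ^ 3 := fun h => mul_ne_zero h2 (pow_ne_zero 3 hx) (by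
      linear_combination h)
    simp only [Set.mem_ofPred_eq, neg_neg, not_lt, (e.injective.ne hne).symm.le_iff_lt]
  · simp only [Set.mem_ofPred_eq, ← mul_neg, mul_pow, hζ, one_mul]

theorem IsHalfSystem.card_eq [Finite F] (h : IsHalfSystem ζ S) :
    Nat.card F = 2 * Nat.card S + 1 := by
  have hcompl : Sᶜ = insert 0 (-S) := by
    ext x
    rcases eq_or_ne x 0 with rfl | hx
    · simp only [Set.mem_compl_iff, h.zero_notMem, not_false_eq_true, Set.mem_insert_iff, true_or]
    · simp only [Set.mem_compl_iff, Set.mem_insert_iff, hx, Set.mem_neg, h.neg_mem_iff x hx,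
        false_or]
  have h0 : (0 : F) ∉ -S := by rw [Set.mem_neg, neg_zero]; exact h.zero_notMem
  have := Set.ncard_add_ncard_compl S
  rw [hcompl, Set.ncard_insert_of_notMem h0, ← Set.image_neg_eq_neg,
    Set.ncard_image_of_injective S neg_injective] at this
  rw [Nat.card_coe_set_eq]
  lia

theorem IsHalfSystem.ne_zero (h : IsHalfSystem ζ S) {x : F} (hx : x ∈ S) : x ≠ 0 :=
  fun h0 => h.zero_notMem (h0 ▸ hx)

theorem IsHalfSystem.mem_or_neg_mem (h : IsHalfSystem ζ S) {x : F} (hx : x ≠ 0) :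
    x ∈ S ∨ -x ∈ S :=
  (em _).imp_right (h.neg_mem_iff x hx).2

theorem IsHalfSystem.pow_mul_mem_iff (h : IsHalfSystem ζ S) (n : ℕ) (x : F) :
    ζ ^ n * x ∈ S ↔ x ∈ S := by
  induction n with
  | zero => rw [pow_zero, one_mul]
  | succ n ih => rw [pow_succ', mul_assoc, h.mul_mem_iff, ih]

end HalfSystem

section CubeRoot

variable {F : Type*} [Field F] {ζ : F}

theorem pow_three_of_sq_add_self_add_one (hζ : ζ ^ 2 + ζ + 1 = 0) : ζ ^ 3 = 1 := by
  linear_combination (ζ - 1) * hζ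

theorem ne_zero_of_sq_add_self_add_one (hζ : ζ ^ 2 + ζ + 1 = 0) : ζ ≠ 0 := by
  rintro rfl
  simp at hζ

theorem add_one_ne_zero_of_sq_add_self_add_one (hζ : ζ ^ 2 + ζ + 1 = 0) : ζ + 1 ≠ 0 := fun h =>
  ne_zero_of_sq_add_self_add_one hζ (by linear_combination (ζ + 1) * h - hζ)

theorem sub_one_ne_zero_of_sq_add_self_add_one (hζ : ζ ^ 2 + ζ + 1 = 0) (h3 : (3 : F) ≠ 0) :
    ζ - 1 ≠ 0 := fun h => h3 (by linear_combination hζ - (ζ + 2) * h)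

theorem exists_sq_add_self_add_one [Finite F] (h : Nat.card F % 3 = 1) :
    ∃ ζ : F, ζ ^ 2 + ζ + 1 = 0 := by
  have : Fact (Nat.Prime 3) := ⟨Nat.prime_three⟩
  obtain ⟨u, hu⟩ := exists_prime_orderOf_dvd_card' (G := Fˣ) 3 (by rw [Nat.card_units]; lia)
  have hu3 : (u : F) ^ 3 = 1 := by
    rw [← Units.val_pow_eq_pow_val, ← hu, pow_orderOf_eq_one, Units.val_one]
  have hu1 : (u : F) - 1 ≠ 0 := by
    rw [sub_ne_zero, ne_eq, Units.val_eq_one, ← orderOf_eq_one_iff, hu]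
    norm_num
  refine ⟨u, (mul_eq_zero.1 ?_).resolve_left hu1⟩
  linear_combination hu3

end CubeRoot

section FieldFrame

variable {F : Type*} [Field F] {ζ b x : F} {S : Set F}

open Classical in
/-- The Ray-Chaudhuri–Wilson starter with group size two: the triples `{(x, 0), (ωx, 0), (bx, 1)}`
for `x ∈ S` and `{(y, 1), (ζy, 1), (ζ²y, 1)}` for `y ∉ b S`, where `ω = ζ + 1` is a primitive sixth
root of unity and `b` is the mean of `1` and `ω`. -/
noncomputable def sextupleStarter (ζ b : F) (S : Set F) : F × Bool → F × Bool
  | (x, false) => if x ∈ S then ((ζ + 1) * x, false) else (-b * ζ * x, true)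
  | (y, true) => if b⁻¹ * y ∈ S then (b⁻¹ * y, false) else (ζ * y, true)

theorem sextupleStarter_false (hx : x ∈ S) :
    sextupleStarter ζ b S (x, false) = ((ζ + 1) * x, false) :=
  if_pos hx

theorem sextupleStarter_add_one_mul (hζ : ζ ^ 2 + ζ + 1 = 0) (hS : IsHalfSystem ζ S)
    (hx : x ∈ S) : sextupleStarter ζ b S ((ζ + 1) * x, false) = (b * x, true) := by
  have hω : (ζ + 1) * x = -(ζ ^ 2 * x) := by linear_combination x * hζ
  have hmem : ζ ^ 2 * x ∈ S := (hS.pow_mul_mem_iff 2 x).2 hx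
  have hnot : (ζ + 1) * x ∉ S := by
    rw [hω, hS.neg_mem_iff _ (hS.ne_zero hmem), not_not]
    exact hmem
  refine (if_neg hnot).trans (Prod.ext ?_ rfl)
  linear_combination -b * x * hζ

theorem sextupleStarter_mul (hb : b ≠ 0) (hx : x ∈ S) :
    sextupleStarter ζ b S (b * x, true) = (x, false) := by
  rw [sextupleStarter, inv_mul_cancel_left₀ hb, if_pos hx]

theorem sextupleStarter_true (hx : b⁻¹ * x ∉ S) :
    sextupleStarter ζ b S (x, true) = (ζ * x, true) :=
  if_neg hx

theorem sextupleStarter_iterate_three (hζ : ζ ^ 2 + ζ + 1 = 0) (hS : IsHalfSystem ζ S)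
    (hb : b ≠ 0) (i : Bool) (hx : x ≠ 0) : let s := sextupleStarter ζ b S
    s (s (s (x, i))) = (x, i) := by
  cases i with
  | false =>
    rcases hS.mem_or_neg_mem hx with hx | hx
    · simp only [sextupleStarter_false hx, sextupleStarter_add_one_mul hζ hS hx,
        sextupleStarter_mul hb hx]
    · have hy := (hS.mul_mem_iff (-x)).2 hx
      have hxy : x = (ζ + 1) * (ζ * -x) := by linear_combination x * hζ
      rw [hxy]
      simp only [sextupleStarter_add_one_mul hζ hS hy, sextupleStarter_mul hb hy,
        sextupleStarter_false hy]
  | true =>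
    by_cases hy : b⁻¹ * x ∈ S
    · rw [← mul_inv_cancel_left₀ hb x]
      simp only [sextupleStarter_mul hb hy, sextupleStarter_false hy,
        sextupleStarter_add_one_mul hζ hS hy]
    · have mul_notMem {y : F} (hy : b⁻¹ * y ∉ S) : b⁻¹ * (ζ * y) ∉ S := by
        rwa [mul_left_comm, hS.mul_mem_iff]
      simp only [sextupleStarter_true hy, sextupleStarter_true (mul_notMem hy),
        sextupleStarter_true (mul_notMem (mul_notMem hy))]
      refine Prod.ext ?_ rfl
      linear_combination x * pow_three_of_sq_add_self_add_one hζ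

theorem exists_linked_of_eq_mul {I : Type*} {s : F × I → F × I} {i : I} {μ d : F} {T : Set F}
    (hs : ∀ x ∈ T, s (x, i) = (μ * x, i)) (hT : ∀ x, x ≠ 0 → x ∈ T ∨ -x ∈ T) (hμ : μ ≠ 0)
    (hμ1 : μ - 1 ≠ 0) (hd : d ≠ 0) :
    ∃ x, x ≠ 0 ∧ x + d ≠ 0 ∧ Linked s (x, i) (x + d, i) := by
  obtain ⟨x, hx⟩ : ∃ x, (μ - 1) * x = d := ⟨_, mul_div_cancel₀ d hμ1⟩
  have hx0 : x ≠ 0 := right_ne_zero_of_mul (hx ▸ hd)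
  rcases hT x hx0 with hxT | hxT
  · have hxd : x + d = μ * x := by linear_combination -hx
    exact ⟨x, hx0, hxd ▸ mul_ne_zero hμ hx0, .inl (hxd ▸ hs x hxT)⟩
  · have hxd : -(μ * x) + d = -x := by linear_combination -hx
    refine ⟨-(μ * x), neg_ne_zero.2 (mul_ne_zero hμ hx0), hxd ▸ neg_ne_zero.2 hx0, .inr ?_⟩
    rw [hxd, hs _ hxT, mul_neg]

theorem exists_linked_sextupleStarter_false_true (hζ : ζ ^ 2 + ζ + 1 = 0) (h2 : (2 : F) ≠ 0)
    (hb : 2 * b = ζ + 2) (hb0 : b ≠ 0) (hS : IsHalfSystem ζ S) {d : F} (hd : d ≠ 0) :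
    ∃ x, x ≠ 0 ∧ x + d ≠ 0 ∧ Linked (sextupleStarter ζ b S) (x, false) (x + d, true) := by
  have hζ0 := ne_zero_of_sq_add_self_add_one hζ
  obtain ⟨x, hx⟩ : ∃ x, ζ * x = 2 * d := ⟨_, mul_div_cancel₀ _ hζ0⟩
  have hx0 : x ≠ 0 := right_ne_zero_of_mul (hx ▸ mul_ne_zero h2 hd)
  rcases hS.mem_or_neg_mem hx0 with hxS | hxS
  · have hxd : x + d = b * x := mul_left_cancel₀ h2 (by linear_combination -hx - x * hb)
    exact ⟨x, hx0, hxd ▸ mul_ne_zero hb0 hx0, .inr (hxd ▸ sextupleStarter_mul hb0 hxS)⟩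
  · have hxd : (ζ + 1) * -x + d = b * -x :=
      mul_left_cancel₀ h2 (by linear_combination -hx + x * hb)
    have hω := add_one_ne_zero_of_sq_add_self_add_one hζ
    exact ⟨_, mul_ne_zero hω (neg_ne_zero.2 hx0), hxd ▸ mul_ne_zero hb0 (neg_ne_zero.2 hx0),
      .inl (hxd ▸ sextupleStarter_add_one_mul hζ hS hxS)⟩

theorem isFrameStarter_sextupleStarter (hζ : ζ ^ 2 + ζ + 1 = 0) (h2 : (2 : F) ≠ 0)
    (h3 : (3 : F) ≠ 0) (hb : 2 * b = ζ + 2) (hS : IsHalfSystem ζ S) :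
    IsFrameStarter (AddMonoidHom.id F) (sextupleStarter ζ b S) := by
  have hζ0 := ne_zero_of_sq_add_self_add_one hζ
  have hω := add_one_ne_zero_of_sq_add_self_add_one hζ
  have hb0 : b ≠ 0 := by
    rintro rfl
    exact h3 (by linear_combination hζ + (ζ - 1) * hb)
  refine ⟨?_, fun p => sextupleStarter_iterate_three hζ hS hb0 p.2, fun d i j hd => ?_⟩
  · rintro ⟨x, _ | _⟩ (hx : x ≠ 0) <;> change (sextupleStarter ζ b S _).1 ≠ 0 <;>
      rw [sextupleStarter] <;> split_ifs
    exacts [mul_ne_zero hω hx, mul_ne_zero (mul_ne_zero (neg_ne_zero.2 hb0) hζ0) hx,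
      mul_ne_zero (inv_ne_zero hb0) hx, mul_ne_zero hζ0 hx]
  · change d ≠ 0 at hd
    match i, j with
    | false, false =>
      exact exists_linked_of_eq_mul (fun _ => sextupleStarter_false)
        (fun _ => hS.mem_or_neg_mem) hω (by rwa [add_sub_cancel_right]) hd
    | true, true =>
      refine exists_linked_of_eq_mul (T := {y | b⁻¹ * y ∉ S}) (fun _ => sextupleStarter_true)
        (fun y hy => ?_) hζ0 (sub_one_ne_zero_of_sq_add_self_add_one hζ h3) hd
      have := hS.neg_mem_iff (b⁻¹ * y) (mul_ne_zero (inv_ne_zero hb0) hy)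
      simp only [Set.mem_ofPred_eq, mul_neg]
      tauto
    | false, true => exact exists_linked_sextupleStarter_false_true hζ h2 hb hb0 hS hd
    | true, false =>
      obtain ⟨x, hx, hxd, h⟩ :=
        exists_linked_sextupleStarter_false_true hζ h2 hb hb0 hS (neg_ne_zero.2 hd)
      exact ⟨x + -d, hxd, by rwa [neg_add_cancel_right], by
        simpa only [neg_add_cancel_right] using h.symm⟩

theorem two_ne_zero_and_three_ne_zero [Finite F] {k : ℕ} (hF : Nat.card F = 6 * k + 1) :
    (2 : F) ≠ 0 ∧ (3 : F) ≠ 0 := by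
  have := Fintype.ofFinite F
  have h : (6 * k + 1 : F) = 0 := by
    have := FiniteField.cast_card_eq_zero F
    rw [← Nat.card_eq_fintype_card, hF] at this
    exact_mod_cast this
  exact ⟨fun h2 => one_ne_zero (α := F) (by linear_combination h - 3 * k * h2),
    fun h3 => one_ne_zero (α := F) (by linear_combination h - 2 * k * h3)⟩

theorem hasKirkmanSystem_two_mul_of_card {k : ℕ} (hF : Nat.card F = 6 * k + 1) :
    HasKirkmanSystem (2 * k) := by
  have := Nat.finite_of_card_ne_zero (hF.trans_ne (by lia))
  obtain ⟨h2, h3⟩ := two_ne_zero_and_three_ne_zero hF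
  obtain ⟨ζ, hζ⟩ := exists_sq_add_self_add_one (F := F) (by lia)
  obtain ⟨S, hS⟩ := exists_isHalfSystem h2 (pow_three_of_sq_add_self_add_one hζ)
  have h := isFrameStarter_sextupleStarter hζ h2 h3 (mul_div_cancel₀ _ h2) hS
  exact h.isKirkmanFrame.hasKirkmanSystem_of_two (by simp) (by rw [hF]; lia)

end FieldFrame

section FieldSystem

variable {F : Type*} [Field F] {ζ : F} {S : Set F}

open Classical in
/-- A parallel class on `F × ZMod 3`: multiplication by `ζ`, staying on the level for elements
of `S` and going up one level for all others. -/
noncomputable def levelStarter (ζ : F) (S : Set F) (p : F × ZMod 3) : F × ZMod 3 :=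
  (ζ * p.1, if p.1 ∈ S then p.2 else p.2 + 1)

theorem levelStarter_of_mem {x : F} (hx : x ∈ S) (i : ZMod 3) :
    levelStarter ζ S (x, i) = (ζ * x, i) :=
  Prod.ext rfl (if_pos hx)

theorem levelStarter_of_notMem {x : F} (hx : x ∉ S) (i : ZMod 3) :
    levelStarter ζ S (x, i) = (ζ * x, i + 1) :=
  Prod.ext rfl (if_neg hx)

theorem levelStarter_iterate_three (hζ : ζ ^ 3 = 1) (hS : IsHalfSystem ζ S) (p : F × ZMod 3) :
    levelStarter ζ S (levelStarter ζ S (levelStarter ζ S p)) = p := by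
  obtain ⟨x, i⟩ := p
  have level_eq : ∀ i : ZMod 3, i + 1 + 1 + 1 = i := by decide
  have h₁ := hS.mul_mem_iff x
  have h₂ := (hS.mul_mem_iff (ζ * x)).trans h₁
  have hx : ζ * (ζ * (ζ * x)) = x := by linear_combination x * hζ
  by_cases hxS : x ∈ S
  · rw [levelStarter_of_mem hxS, levelStarter_of_mem (h₁.2 hxS), levelStarter_of_mem (h₂.2 hxS), hx]
  · rw [levelStarter_of_notMem hxS, levelStarter_of_notMem (mt h₁.1 hxS),
      levelStarter_of_notMem (mt h₂.1 hxS), hx, level_eq]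

/-- The classes of the Ray-Chaudhuri–Wilson system on `F × ZMod 3`: the translates of
`levelStarter ζ S`, and for `x ∈ S` a class of triples meeting every level. -/
noncomputable def fieldRotation (ζ : F) (S : Set F) : F ⊕ S → F × ZMod 3 → F × ZMod 3 :=
  Sum.elim (develop (levelStarter ζ S)) fun x => levelShift fun i => ζ ^ i.val * ((ζ - 1) * x)

theorem exists_fieldRotation_eq_succ (hζ : ζ ^ 2 + ζ + 1 = 0) (h3 : (3 : F) ≠ 0)
    (hS : IsHalfSystem ζ S) (a b : F) (i : ZMod 3) :
    ∃ c, fieldRotation ζ S c (a, i) = (b, i + 1) := by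
  obtain ⟨y, hy⟩ : ∃ y, (ζ - 1) * y = b - a :=
    ⟨_, mul_div_cancel₀ _ (sub_one_ne_zero_of_sq_add_self_add_one hζ h3)⟩
  by_cases hyS : y ∈ S
  · have hζi : ζ ^ i.val ≠ 0 := pow_ne_zero _ (ne_zero_of_sq_add_self_add_one hζ)
    have hx : (ζ ^ i.val)⁻¹ * y ∈ S := by
      rwa [← hS.pow_mul_mem_iff i.val, mul_inv_cancel_left₀ hζi]
    refine ⟨.inr ⟨_, hx⟩, Prod.ext ?_ rfl⟩
    change a + ζ ^ i.val * ((ζ - 1) * ((ζ ^ i.val)⁻¹ * y)) = b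
    rw [mul_left_comm (ζ - 1), mul_inv_cancel_left₀ hζi, hy, add_sub_cancel]
  · refine ⟨.inl (a - y), ?_⟩
    change develop _ (a - y) (a, i) = (b, i + 1)
    rw [develop, sub_sub_cancel, levelStarter_of_notMem hyS]
    exact Prod.ext (by linear_combination hy) rfl

theorem exists_linked_fieldRotation_same (hζ : ζ ^ 2 + ζ + 1 = 0) (h3 : (3 : F) ≠ 0)
    (hS : IsHalfSystem ζ S) {a b : F} (hab : a ≠ b) (i : ZMod 3) :
    ∃ c, Linked (fieldRotation ζ S c) (a, i) (b, i) := by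
  obtain ⟨y, -, -, h⟩ := exists_linked_of_eq_mul (i := i) (s := levelStarter ζ S)
    (fun _ hx => levelStarter_of_mem hx i) (fun _ => hS.mem_or_neg_mem)
    (ne_zero_of_sq_add_self_add_one hζ) (sub_one_ne_zero_of_sq_add_self_add_one hζ h3)
    (sub_ne_zero.2 hab.symm)
  refine ⟨.inl (a - y), ?_⟩
  convert h.develop (a - y) using 2 <;> abel

theorem isKirkman_fieldRotation (hζ : ζ ^ 2 + ζ + 1 = 0) (h3 : (3 : F) ≠ 0)
    (hS : IsHalfSystem ζ S) : IsKirkman (fieldRotation ζ S) where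
  iterate_three
    | .inl c, p => by
      change develop _ c (develop _ c (develop _ c p)) = p
      rw [develop_develop, develop_develop]
      exact develop_of_eq
        (levelStarter_iterate_three (pow_three_of_sq_add_self_add_one hζ) hS _)
    | .inr x, p => by
      refine levelShift_iterate_three (w := fun i => ζ ^ i.val * ((ζ - 1) * x)) ?_ p
      change ζ ^ 0 * _ + ζ ^ 1 * _ + ζ ^ 2 * _ = (0 : F)
      linear_combination (ζ - 1) * x * hζ
  exists_linked := by
    rintro ⟨a, i⟩ ⟨b, j⟩ hpq
    rcases eq_or_ne i j with rfl | hij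
    · exact exists_linked_fieldRotation_same hζ h3 hS (ne_of_apply_ne (·, i) hpq) i
    · rcases zmod_three_eq_add_one_or hij with rfl | rfl
      · exact (exists_fieldRotation_eq_succ hζ h3 hS a b i).imp fun _ => .inl
      · exact (exists_fieldRotation_eq_succ hζ h3 hS b a j).imp fun _ => .inr

theorem hasKirkmanSystem_three_mul_of_card {k : ℕ} (hF : Nat.card F = 6 * k + 1) :
    HasKirkmanSystem (3 * k) := by
  have := Nat.finite_of_card_ne_zero (hF.trans_ne (by lia))
  obtain ⟨h2, h3⟩ := two_ne_zero_and_three_ne_zero hF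
  obtain ⟨ζ, hζ⟩ := exists_sq_add_self_add_one (F := F) (by lia)
  obtain ⟨S, hS⟩ := exists_isHalfSystem h2 (pow_three_of_sq_add_self_add_one hζ)
  have hcard := hS.card_eq
  refine (isKirkman_fieldRotation hζ h3 hS).hasKirkmanSystem ?_ ?_
  · rw [Nat.card_prod, hF, Nat.card_zmod]
    lia
  · rw [Nat.card_sum]
    lia

end FieldSystem

theorem exists_field_of_isPrimePow {q : ℕ} (hq : IsPrimePow q) : Nonempty (Field (Fin q)) :=
  Fintype.nonempty_field_iff.2 (by rwa [Fintype.card_fin])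

theorem hasKirkmanSystem_two_mul {k : ℕ} (hk : IsPrimePow (6 * k + 1)) :
    HasKirkmanSystem (2 * k) :=
  have ⟨_⟩ := exists_field_of_isPrimePow hk
  hasKirkmanSystem_two_mul_of_card (Nat.card_fin _)

theorem hasKirkmanSystem_three_mul {k : ℕ} (hk : IsPrimePow (6 * k + 1)) :
    HasKirkmanSystem (3 * k) :=
  have ⟨_⟩ := exists_field_of_isPrimePow hk
  hasKirkmanSystem_three_mul_of_card (Nat.card_fin _)

section SmallFrames

instance {P : Type*} [DecidableEq P] (s : P → P) (p q : P) : Decidable (Linked s p q) :=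
  inferInstanceAs (Decidable (_ ∨ _))

theorem HasUniformFrame.of_card_eq {X I J X' I' J' : Type*} [Finite X] [Finite I] [Finite J]
    [Finite X'] [Finite I'] [Finite J'] (h : HasUniformFrame X I J)
    (hX : Nat.card X = Nat.card X') (hI : Nat.card I = Nat.card I')
    (hJ : Nat.card J = Nat.card J') : HasUniformFrame X' I' J' :=
  have ⟨x⟩ := Finite.card_eq.1 hX
  have ⟨i⟩ := Finite.card_eq.1 hI
  have ⟨j⟩ := Finite.card_eq.1 hJ
  h.congr x i j

/-- The rotation with the triples of a list as cycles, fixing all other points. -/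
def rotationOfList {P : Type*} [DecidableEq P] : List (P × P × P) → P → P
  | [], p => p
  | (a, b, c) :: B, p =>
    if p = a then b else if p = b then c else if p = c then a else rotationOfList B p

/-- The slope of the line spanned by a nonzero vector of the plane over `ZMod 3`, `none` being the
vertical direction. -/
def lineSlope (v : ZMod 3 × ZMod 3) : Option (ZMod 3) :=
  if v.1 = 0 then none else some (v.2 / v.1)

/-- A direction vector of the lines of a given slope. -/
def slopeVector : Option (ZMod 3) → ZMod 3 × ZMod 3
  | none => (0, 1)
  | some m => (1, m)

/-- The affine space of dimension three over `ZMod 3` without one line, written as the punctured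
plane times `ZMod 3`. -/
abbrev PuncturedSpace : Type :=
  {p : (ZMod 3 × ZMod 3) × ZMod 3 // p.1 ≠ 0}

/-- The translations in directions transversal to the removed line, as rotations: the planes
through that line are the groups, and the class `(x, k)` consists of the lines with direction
`(slopeVector x, k)` outside the plane of slope `x`. -/
def spaceRotation (c : Option (ZMod 3) × ZMod 3) (p : PuncturedSpace) : PuncturedSpace :=
  if h : p.1.1 + slopeVector c.1 ≠ 0 then ⟨(p.1.1 + slopeVector c.1, p.1.2 + c.2), h⟩ else p

set_option synthInstance.maxSize 256 in
theorem isKirkmanFrame_spaceRotation :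
    IsKirkmanFrame (fun p => lineSlope p.1.1) Prod.fst spaceRotation where
  off_hole := by decide +kernel
  iterate_three := by decide +kernel
  exists_linked := by decide +kernel

theorem hasUniformFrame_of_card_four {X : Type*} (hX : Nat.card X = 4) :
    HasUniformFrame X (Fin 6) (Fin 3) := by
  have hP : ∀ x, Fintype.card {p : PuncturedSpace // lineSlope p.1.1 = x} = 6 := by decide +kernel
  have hC : ∀ x, Fintype.card {c : Option (ZMod 3) × ZMod 3 // c.1 = x} = 3 := by decide +kernel
  have := Nat.finite_of_card_ne_zero (hX.trans_ne (by lia))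
  refine (isKirkmanFrame_spaceRotation.hasUniformFrame
    (fun x => Fintype.equivFinOfCardEq (hP x))
    fun x => Fintype.equivFinOfCardEq (hC x)).of_card_eq ?_ rfl rfl
  rw [hX, Nat.card_eq_fintype_card]; rfl

/-- A frame starter with five groups of size six. -/
def fiveStarter : ZMod (3 * 5) × Fin 2 → ZMod (3 * 5) × Fin 2 :=
  rotationOfList
    [((4, 0), (8, 0), (11, 0)), ((1, 0), (2, 0), (9, 1)), ((6, 0), (12, 0), (8, 1)),
      ((7, 0), (9, 0), (13, 1)), ((3, 0), (2, 1), (4, 1)), ((13, 0), (1, 1), (7, 1)),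
      ((14, 0), (11, 1), (12, 1)), ((3, 1), (6, 1), (14, 1))]

/-- A frame starter with eleven groups of size six. -/
def elevenStarter : ZMod (3 * 11) × Fin 2 → ZMod (3 * 11) × Fin 2 :=
  rotationOfList
    [((1, 0), (24, 0), (25, 0)), ((3, 0), (6, 0), (20, 0)), ((4, 0), (10, 0), (29, 1)),
      ((5, 0), (13, 0), (8, 1)), ((7, 0), (27, 0), (20, 1)), ((8, 0), (12, 0), (26, 1)),
      ((14, 0), (16, 0), (18, 1)), ((15, 0), (30, 0), (9, 1)), ((17, 0), (29, 0), (16, 1)),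
      ((21, 0), (28, 0), (5, 1)), ((26, 0), (31, 0), (32, 1)), ((2, 0), (23, 1), (31, 1)),
      ((9, 0), (24, 1), (25, 1)), ((18, 0), (15, 1), (27, 1)), ((19, 0), (10, 1), (17, 1)),
      ((23, 0), (13, 1), (30, 1)), ((32, 0), (4, 1), (7, 1)), ((1, 1), (3, 1), (21, 1)),
      ((2, 1), (6, 1), (12, 1)), ((14, 1), (19, 1), (28, 1))]

/-- Reduction modulo `n` of residues modulo `3 * n`. -/
def reduceMod (n : ℕ) : ZMod (3 * n) →+ ZMod n :=
  (ZMod.castHom (Dvd.intro_left 3 rfl) (ZMod n)).toAddMonoidHom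

theorem isFrameStarter_fiveStarter : IsFrameStarter (reduceMod 5) fiveStarter where
  off_hole := by decide +kernel
  iterate_three := by decide +kernel
  exists_linked := by decide +kernel

theorem isFrameStarter_elevenStarter : IsFrameStarter (reduceMod 11) elevenStarter where
  off_hole := by decide +kernel
  iterate_three := by decide +kernel
  exists_linked := by decide +kernel

theorem IsFrameStarter.hasUniformFrame_of_card {n : ℕ} [NeZero n]
    {s : ZMod (3 * n) × Fin 2 → ZMod (3 * n) × Fin 2} (h : IsFrameStarter (reduceMod n) s)
    {X : Type*} (hX : Nat.card X = n) : HasUniformFrame X (Fin 6) (Fin 3) := by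
  have hsurj : Function.Surjective (reduceMod n) := ZMod.castHom_surjective (Dvd.intro_left 3 rfl)
  have hker : Nat.card (reduceMod n).ker = 3 := by
    have := (reduceMod n).ker.card_mul_index
    rw [AddSubgroup.index_ker, AddMonoidHom.range_eq_top.2 hsurj, AddSubgroup.card_top,
      Nat.card_zmod, Nat.card_zmod] at this
    exact Nat.eq_of_mul_eq_mul_right (NeZero.pos n) this
  have := Nat.finite_of_card_ne_zero (hX.trans_ne (NeZero.ne n))
  refine (h.hasUniformFrame hsurj).of_card_eq ?_ ?_ ?_
  · rw [Nat.card_zmod, hX]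
  · rw [Nat.card_prod, hker, Nat.card_fin, Nat.card_fin]
  · rw [hker, Nat.card_fin]

theorem hasUniformFrame_of_card_five {X : Type*} (hX : Nat.card X = 5) :
    HasUniformFrame X (Fin 6) (Fin 3) :=
  isFrameStarter_fiveStarter.hasUniformFrame_of_card hX

theorem hasKirkmanSystem_eleven : HasKirkmanSystem 11 := by
  obtain ⟨r, h⟩ := isFrameStarter_elevenStarter.hasUniformFrame_of_card (Nat.card_fin 11)
  have one : HasKirkmanSystem 1 := hasKirkmanSystem_zero.three_mul_add_one
  have := h.hasKirkmanSystem_of_fiber (g := fun x => x) (Nat.card_fin 6) (Nat.card_fin 3)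
    fun γ => by rwa [show Nat.card {x : Fin 11 // x = γ} = 1 from Nat.card_unique]
  rwa [Nat.card_fin] at this

end SmallFrames

section GroupDivisible

/-- Group divisible designs on `X` with blocks `B b` and the fibres of `g` as groups. -/
structure IsGroupDivisible {X Γ β : Type*} (g : X → Γ) (B : β → Set X) : Prop where
  injOn : ∀ b, Set.InjOn g (B b)
  existsUnique_block : ∀ x y, g x ≠ g y → ∃! b, x ∈ B b ∧ y ∈ B b

variable {X Γ β I J : Type*} {g : X → Γ} {B : β → Set X}
  {R : ∀ b, B b × J → B b × I → B b × I}

open Classical in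
/-- Wilson's construction: given a rotation for each block, the class `c` permutes the points over
`x` as it does for the block through `c.1` and `x`. -/
noncomputable def blockwiseRotation (R : ∀ b, B b × J → B b × I → B b × I) (c : X × J)
    (p : X × I) : X × I :=
  if h : ∃ b, c.1 ∈ B b ∧ p.1 ∈ B b then
    Prod.map Subtype.val id
      (R h.choose (⟨c.1, h.choose_spec.1⟩, c.2) (⟨p.1, h.choose_spec.2⟩, p.2))
  else p

theorem IsGroupDivisible.blockwiseRotation_apply (h : IsGroupDivisible g B) {b : β}
    {c : B b × J} {p : B b × I} (hpc : p.1 ≠ c.1) :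
    blockwiseRotation R (Prod.map Subtype.val id c) (Prod.map Subtype.val id p) =
      Prod.map Subtype.val id (R b c p) := by
  have hex : ∃ b, c.1.1 ∈ B b ∧ p.1.1 ∈ B b := ⟨b, c.1.2, p.1.2⟩
  have hg : g c.1 ≠ g p.1 := fun hg => hpc (Subtype.ext (h.injOn b c.1.2 p.1.2 hg)).symm
  have rotation_eq (b' : β) (hb' : c.1.1 ∈ B b' ∧ p.1.1 ∈ B b') :
      Prod.map Subtype.val id (R b' (⟨c.1, hb'.1⟩, c.2) (⟨p.1, hb'.2⟩, p.2)) =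
        Prod.map Subtype.val id (R b c p) := by
    obtain rfl : b' = b := (h.existsUnique_block _ _ hg).unique hb' ⟨c.1.2, p.1.2⟩
    rfl
  exact (dif_pos hex).trans (rotation_eq _ hex.choose_spec)

theorem IsGroupDivisible.isKirkmanFrame (h : IsGroupDivisible g B)
    (hR : ∀ b, IsKirkmanFrame Prod.fst Prod.fst (R b)) :
    IsKirkmanFrame (fun p => g p.1) (fun c => g c.1) (blockwiseRotation R) := by
  have off_hole {b : β} {c : B b × J} {p : B b × I} (hp : p.1 ≠ c.1) : g p.1 ≠ g c.1 :=
    fun hg => hp (Subtype.ext (h.injOn b p.1.2 c.1.2 hg))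
  have exists_lift (p : X × I) (c : X × J) (hp : g p.1 ≠ g c.1) :
      ∃ (b : β) (p' : B b × I) (c' : B b × J), p'.1 ≠ c'.1 ∧
        Prod.map Subtype.val id p' = p ∧ Prod.map Subtype.val id c' = c := by
    obtain ⟨b, ⟨hpb, hcb⟩, -⟩ := h.existsUnique_block _ _ hp
    exact ⟨b, (⟨p.1, hpb⟩, p.2), (⟨c.1, hcb⟩, c.2), fun e => hp (congrArg (g ·.1) e),
      rfl, rfl⟩
  refine ⟨fun c p hp => ?_, fun c p hp => ?_, fun p q hpq => ?_⟩
  · obtain ⟨b, p, c, hpc, rfl, rfl⟩ := exists_lift p c hp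
    rw [h.blockwiseRotation_apply hpc]
    exact off_hole ((hR b).off_hole c p hpc)
  · obtain ⟨b, p, c, hpc, rfl, rfl⟩ := exists_lift p c hp
    have hpc' := (hR b).off_hole c p hpc
    rw [h.blockwiseRotation_apply hpc, h.blockwiseRotation_apply hpc',
      h.blockwiseRotation_apply ((hR b).off_hole c _ hpc'), (hR b).iterate_three c p hpc]
  · obtain ⟨b, ⟨hpb, hqb⟩, -⟩ := h.existsUnique_block _ _ hpq
    obtain ⟨c, hpc, hqc, hc⟩ := (hR b).exists_linked (⟨p.1, hpb⟩, p.2) (⟨q.1, hqb⟩, q.2)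
      fun e => hpq (congrArg (g ·.1) e)
    refine ⟨Prod.map Subtype.val id c, off_hole hpc, off_hole hqc, hc.imp (fun e => ?_) fun e => ?_⟩
    · exact (h.blockwiseRotation_apply hpc).trans (congrArg (Prod.map Subtype.val id) e)
    · exact (h.blockwiseRotation_apply hqc).trans (congrArg (Prod.map Subtype.val id) e)

theorem IsGroupDivisible.hasKirkmanSystem [Finite X] (h : IsGroupDivisible g B)
    (hB : ∀ b, Nat.card (B b) = 4 ∨ Nat.card (B b) = 5)
    (hΓ : ∀ γ, HasKirkmanSystem (Nat.card {x // g x = γ})) : HasKirkmanSystem (Nat.card X) := by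
  choose R hR using fun b =>
    (hB b).elim (hasUniformFrame_of_card_four ·) (hasUniformFrame_of_card_five ·)
  exact (h.isKirkmanFrame hR).hasKirkmanSystem_of_fiber (Nat.card_fin 6) (Nat.card_fin 3) hΓ

end GroupDivisible

section Transversal

variable {R K : Type*} [CommRing R]

/-- The lines of the plane `R × R`, dually: the line `l` meets the group `k` in the value of the
linear form `v k` at `l`, and is discarded there if this value is outside `U k`. -/
def truncatedLine (v : K → R × R) (U : K → Set R) (l : R × R) : Set (Σ k, U k) :=
  {y | (v y.1).1 * l.1 + (v y.1).2 * l.2 = y.2}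

theorem isGroupDivisible_truncatedLine {v : K → R × R} (U : K → Set R)
    (hv : Pairwise fun k l => IsUnit ((v k).1 * (v l).2 - (v l).1 * (v k).2)) :
    IsGroupDivisible Sigma.fst (truncatedLine v U) where
  injOn l := by
    rintro ⟨k, x⟩ hx ⟨_, y⟩ hy rfl
    exact congrArg _ (Subtype.ext (hx.symm.trans hy))
  existsUnique_block := by
    rintro ⟨k, x, hx⟩ ⟨l, y, hy⟩ hkl
    obtain ⟨d, hd⟩ := (hv hkl).exists_left_inv
    refine ⟨(d * (x * (v l).2 - y * (v k).2), d * ((v k).1 * y - (v l).1 * x)), ⟨?_, ?_⟩, ?_⟩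
    · change (v k).1 * _ + (v k).2 * _ = x
      linear_combination x * hd
    · change (v l).1 * _ + (v l).2 * _ = y
      linear_combination y * hd
    · rintro ⟨a, b⟩ ⟨ha, hb⟩
      simp only [truncatedLine, Set.mem_ofPred_eq] at ha hb
      rw [← ha, ← hb]
      exact Prod.ext (by linear_combination -a * hd) (by linear_combination -b * hd)

/-- The linear forms of pairwise distinct slopes `e k`, and one more of infinite slope. -/
def slopeForm (e : K → R) : Option K → R × R
  | none => (0, 1)
  | some k => (1, e k)

theorem isUnit_det_slopeForm {e : K → R} (he : Pairwise fun k l => IsUnit (e l - e k)) :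
    Pairwise fun k l => IsUnit
      ((slopeForm e k).1 * (slopeForm e l).2 - (slopeForm e l).1 * (slopeForm e k).2)
  | none, none, h => absurd rfl h
  | none, some l, _ => by simp [slopeForm]
  | some k, none, _ => by simp [slopeForm]
  | some k, some l, h => by simpa [slopeForm] using he (ne_of_apply_ne some h)

theorem HasKirkmanSystem.four_mul_add [Finite R] {e : Fin 4 → R}
    (he : Pairwise fun k l => IsUnit (e l - e k)) (hR : HasKirkmanSystem (Nat.card R)) {u : ℕ}
    (hu : u ≤ Nat.card R) (h : HasKirkmanSystem u) : HasKirkmanSystem (4 * Nat.card R + u) := by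
  obtain ⟨S, -, hS⟩ := Set.exists_subset_card_eq (s := (Set.univ : Set R))
    (hu.trans_eq (Set.ncard_univ R).symm)
  let U (k : Option (Fin 4)) : Set R := k.elim S fun _ => Set.univ
  have hU : ∀ k, Nat.card (U (some k)) = Nat.card R := fun _ => Nat.card_univ
  have hX : Nat.card (Σ k, U k) = 4 * Nat.card R + u := by
    simp only [Nat.card_sigma, Fintype.sum_option, hU, Finset.sum_const, Finset.card_univ,
      Fintype.card_fin, smul_eq_mul]
    exact add_comm _ _ |>.trans (congrArg _ hS)
  have design := isGroupDivisible_truncatedLine U (isUnit_det_slopeForm he)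
  rw [← hX]
  refine design.hasKirkmanSystem (fun l => ?_) fun k => ?_
  · have upper : Nat.card (truncatedLine (slopeForm e) U l) ≤ 5 :=
      (Nat.card_le_card_of_injective _ (design.injOn l).injective).trans (by simp)
    have lower : 4 ≤ Nat.card (truncatedLine (slopeForm e) U l) := by
      let point (k : Fin 4) : truncatedLine (slopeForm e) U l :=
        ⟨⟨some k, (slopeForm e (some k)).1 * l.1 + (slopeForm e (some k)).2 * l.2, Set.mem_univ _⟩,
          rfl⟩
      have point_injective : Function.Injective point := fun k k' h =>
        Option.some_injective _ (congrArg (·.1.1) h)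
      simpa only [Nat.card_fin] using Nat.card_le_card_of_injective point point_injective
    lia
  · rw [Nat.card_congr (Equiv.sigmaSubtype k)]
    cases k with
    | none => rwa [← hS] at h
    | some k => rwa [hU]

theorem HasKirkmanSystem.four_mul_add_of_isPrimePow {m u : ℕ} (hm : IsPrimePow m) (h4 : 4 ≤ m)
    (hR : HasKirkmanSystem m) (hu : u ≤ m) (h : HasKirkmanSystem u) :
    HasKirkmanSystem (4 * m + u) := by
  obtain ⟨_⟩ := exists_field_of_isPrimePow hm
  have := HasKirkmanSystem.four_mul_add (R := Fin m) (e := Fin.castLE h4) (fun k l hkl =>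
    (sub_ne_zero.2 ((Fin.castLE_injective h4).ne hkl.symm)).isUnit)
  simp only [Nat.card_fin] at this
  exact this hR hu h

theorem HasKirkmanSystem.four_mul_add_of_coprime_six {m u : ℕ} (hm : m.Coprime 6)
    (hR : HasKirkmanSystem m) (hu : u ≤ m) (h : HasKirkmanSystem u) :
    HasKirkmanSystem (4 * m + u) := by
  have : NeZero m := ⟨fun h0 => by simp [h0] at hm⟩
  have dvd_six : ∀ k l : Fin 4, k < l → (l - k : ℕ) ∣ 6 := by decide
  have isUnit_sub {k l : Fin 4} (hkl : k < l) : IsUnit ((l : ℕ) - (k : ℕ) : ZMod m) := by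
    rw [← Nat.cast_sub hkl.le, ZMod.isUnit_iff_coprime]
    exact hm.symm.coprime_dvd_left (dvd_six k l hkl)
  have := four_mul_add (e := fun k : Fin 4 => ((k : ℕ) : ZMod m)) fun k l hkl =>
    hkl.lt_or_gt.elim isUnit_sub fun h => by simpa only [neg_sub] using (isUnit_sub h).neg
  simp only [Nat.card_zmod] at this
  exact this hR hu h

end Transversal

section TwentySeven

/-- The blocks of a design with blocks of size four and nine groups of size three, as the
translates of two base blocks in `(ZMod 3)³`. -/
def affineBlock (b : Fin 2 × (ZMod 3 × ZMod 3) × ZMod 3) : Finset ((ZMod 3 × ZMod 3) × ZMod 3) :=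
  Finset.map (addLeftEmbedding b.2)
    (![{((0, 0), 0), ((0, 1), 0), ((1, 0), 0), ((1, 1), 1)},
      {((0, 0), 0), ((0, 1), 2), ((1, 2), 1), ((2, 2), 0)}] b.1)

set_option synthInstance.maxSize 256 in
theorem isGroupDivisible_affineBlock :
    IsGroupDivisible Prod.fst fun b => (affineBlock b : Set ((ZMod 3 × ZMod 3) × ZMod 3)) where
  injOn := by
    simp only [Set.InjOn, SetLike.mem_coe]
    decide +kernel
  existsUnique_block := by
    simp only [SetLike.mem_coe, ExistsUnique]
    decide +kernel

theorem hasKirkmanSystem_twenty_seven : HasKirkmanSystem 27 := by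
  have card_block : ∀ b, (affineBlock b).card = 4 := by decide +kernel
  have := isGroupDivisible_affineBlock.hasKirkmanSystem
    (fun b => .inl ((Nat.card_eq_card_toFinset _).trans (by simp [card_block b]))) fun γ => by
      rw [card_fiber_fst (ZMod 3) (·) γ, Nat.card_unique, Nat.card_zmod]
      exact hasKirkmanSystem_three_mul (k := 1) (by norm_num : Nat.Prime 7).isPrimePow
  simpa only [Nat.card_prod, Nat.card_zmod] using this

end TwentySeven

section Spectrum

theorem exists_coprime_six {t : ℕ} (ht : 68 ≤ t) :
    ∃ m, m.Coprime 6 ∧ 4 * m ≤ t ∧ t ≤ 5 * m := by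
  have exists_residue : ∃ k i, (i = 1 ∨ i = 5) ∧ 4 * (6 * k + i) ≤ t ∧ t ≤ 5 * (6 * k + i) := by
    by_cases h5 : t / 4 % 6 = 5
    · exact ⟨t / 4 / 6, 5, by lia⟩
    by_cases h0 : t / 4 % 6 = 0
    · exact ⟨t / 4 / 6 - 1, 5, by lia⟩
    · exact ⟨t / 4 / 6, 1, by lia⟩
  obtain ⟨k, i, hi, h⟩ := exists_residue
  refine ⟨6 * k + i, ?_, h⟩
  rw [Nat.coprime_mul_left_add_left]
  rcases hi with rfl | rfl <;> norm_num

theorem exists_wilson_parameter {t : ℕ} (ht : 16 ≤ t) (h26 : t ≠ 26) (h27 : t ≠ 27) :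
    ∃ m, (m.Coprime 6 ∨ 4 ≤ m ∧ IsPrimePow m) ∧ 4 * m ≤ t ∧ t ≤ 5 * m := by
  rcases le_or_gt 68 t with h68 | h68
  · exact (exists_coprime_six h68).imp fun m hm => hm.imp_left Or.inl
  by_cases h : t ≤ 20
  · exact ⟨4, .inr ⟨le_rfl, Nat.prime_two.isPrimePow.pow two_ne_zero⟩, by lia⟩
  by_cases h : t ≤ 25
  · exact ⟨5, .inl (by norm_num), by lia⟩
  by_cases h : t ≤ 35
  · exact ⟨7, .inl (by norm_num), by lia⟩
  by_cases h : t ≤ 45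
  · exact ⟨9, .inr ⟨by lia, Nat.prime_three.isPrimePow.pow two_ne_zero⟩, by lia⟩
  by_cases h : t ≤ 55
  · exact ⟨11, .inl (by norm_num), by lia⟩
  by_cases h : t ≤ 65
  · exact ⟨13, .inl (by norm_num), by lia⟩
  · exact ⟨16, .inr ⟨by lia, Nat.prime_two.isPrimePow.pow four_ne_zero⟩, by lia⟩

theorem hasKirkmanSystem_of_lt_sixteen {t : ℕ} (ht : t < 16) : HasKirkmanSystem t := by
  have isPrimePow_twenty_five : IsPrimePow 25 := Nat.prime_five.isPrimePow.pow two_ne_zero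
  have one := hasKirkmanSystem_zero.three_mul_add_one
  have two := hasKirkmanSystem_two_mul (k := 1) (by norm_num : Nat.Prime 7).isPrimePow
  have three := hasKirkmanSystem_three_mul (k := 1) (by norm_num : Nat.Prime 7).isPrimePow
  have four := one.three_mul_add_one
  interval_cases t
  · exact hasKirkmanSystem_zero
  · exact one
  · exact two
  · exact three
  · exact four
  · exact one.four_mul_add_of_coprime_six (m := 1) (by norm_num) le_rfl one
  · exact hasKirkmanSystem_three_mul (k := 2) (by norm_num : Nat.Prime 13).isPrimePow
  · exact two.three_mul_add_one
  · exact hasKirkmanSystem_two_mul (k := 4) isPrimePow_twenty_five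
  · exact hasKirkmanSystem_three_mul (k := 3) (by norm_num : Nat.Prime 19).isPrimePow
  · exact three.three_mul_add_one
  · exact hasKirkmanSystem_eleven
  · exact hasKirkmanSystem_three_mul (k := 4) isPrimePow_twenty_five
  · exact four.three_mul_add_one
  · exact hasKirkmanSystem_two_mul (k := 7) (by norm_num : Nat.Prime 43).isPrimePow
  · exact hasKirkmanSystem_three_mul (k := 5) (by norm_num : Nat.Prime 31).isPrimePow

theorem hasKirkmanSystem (t : ℕ) : HasKirkmanSystem t := by
  induction t using Nat.strong_induction_on with
  | _ t ih =>
    rcases lt_or_ge t 16 with h16 | h16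
    · exact hasKirkmanSystem_of_lt_sixteen h16
    rcases eq_or_ne t 26 with rfl | h26
    · exact hasKirkmanSystem_two_mul (k := 13) (by norm_num : Nat.Prime 79).isPrimePow
    rcases eq_or_ne t 27 with rfl | h27
    · exact hasKirkmanSystem_twenty_seven
    obtain ⟨m, hm, hmt, htm⟩ := exists_wilson_parameter h16 h26 h27
    obtain ⟨u, rfl⟩ := Nat.exists_eq_add_of_le hmt
    have hu : u ≤ m := by lia
    have base := ih m (by lia)
    have rest := ih u (by lia)
    rcases hm with hm | ⟨h4, hm⟩
    · exact base.four_mul_add_of_coprime_six hm hu rest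
    · exact base.four_mul_add_of_isPrimePow hm h4 hu rest

end Spectrum

section BlowUp

theorem supp_connectedComponentMk_eq_range {V W : Type*} {H : SimpleGraph W} {F : SimpleGraph V}
    (hH : H.Preconnected) (f : H →g F) (hf : ∀ x w, F.Adj (f x) w → w ∈ Set.range f) (x : W) :
    (F.connectedComponentMk (f x)).supp = Set.range f := by
  ext v
  rw [ConnectedComponent.mem_supp_iff, ConnectedComponent.eq]
  constructor
  · intro h
    induction (F.reachable_iff_reflTransGen _ _).1 h.symm with
    | refl => exact Set.mem_range_self x
    | tail _ hadj ih =>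
      obtain ⟨y, rfl⟩ := ih ((F.reachable_iff_reflTransGen _ _).2 ‹_›).symm
      exact hf y _ hadj
  · rintro ⟨y, rfl⟩
    exact (hH y x).map f

theorem isHFactor_of_embedding {V W : Type*} {H : SimpleGraph W} {F : SimpleGraph V}
    (hH : H.Preconnected)
    (h : ∀ v, ∃ f : H ↪g F, v ∈ Set.range f ∧ ∀ x w, F.Adj (f x) w → w ∈ Set.range f) :
    IsHFactor H F := by
  refine ConnectedComponent.ind fun v => ?_
  obtain ⟨f, ⟨x, rfl⟩, hf⟩ := h v
  have hsupp : (F.connectedComponentMk (f x)).supp = Set.range f :=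
    supp_connectedComponentMk_eq_range hH f.toHom hf x
  rw [hsupp]
  exact ⟨f.isoInduceRange.symm⟩

theorem preconnected_comap_snd_top {A K : Type*} [Nontrivial K] :
    ((⊤ : SimpleGraph K).comap (Prod.snd : A × K → K)).Preconnected := by
  intro x y
  rcases eq_or_ne x.2 y.2 with h | h
  · obtain ⟨k, hk⟩ := exists_ne x.2
    have hxk : ((⊤ : SimpleGraph K).comap Prod.snd).Adj x (x.1, k) := hk.symm
    have hky : ((⊤ : SimpleGraph K).comap Prod.snd).Adj (x.1, k) y :=
      hk.trans_eq h
    exact hxk.reachable.trans hky.reachable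
  · exact Adj.reachable (G := (⊤ : SimpleGraph K).comap Prod.snd) h

/-- The graph on the points whose edges are the pairs inside the triples of `s`. -/
def triangleGraph {P : Type*} (s : P → P) : SimpleGraph P :=
  .fromRel fun p q => s p = q

/-- The union of the blown-up triples of `s` and the cliques on the fibres of `π`. -/
def cliqueBlowUp {V P : Type*} (π : V → P) (s : P → P) : SimpleGraph V :=
  ((⊤ : SimpleGraph P).comap π)ᶜ ⊔ (triangleGraph s).comap π

variable {V P A B : Type*} {s : P → P}

theorem triangleGraph_adj {p q : P} : (triangleGraph s).Adj p q ↔ p ≠ q ∧ Linked s p q :=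
  Iff.rfl

theorem cliqueBlowUp_adj {π : V → P} {v w : V} :
    (cliqueBlowUp π s).Adj v w ↔ v ≠ w ∧ (π v = π w ∨ Linked s (π v) (π w)) := by
  simp only [cliqueBlowUp, sup_adj, compl_adj, comap_adj, top_adj, triangleGraph_adj]
  have := ne_of_apply_ne π (x := v) (y := w)
  tauto

/-- The vertices over the triple of `s` through `p`. -/
def blockAt (e : V ≃ P × A) (s : P → P) (p : P) (x : A × ZMod 3) : V :=
  e.symm (tripleAt s p x.2, x.1)

theorem fst_blockAt (e : V ≃ P × A) (p : P) (x : A × ZMod 3) :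
    (e (blockAt e s p x)).1 = tripleAt s p x.2 := by
  rw [blockAt, Equiv.apply_symm_apply]

theorem blockAt_injective (e : V ≃ P × A) (h3 : ∀ p, s (s (s p)) = p) (hne : ∀ p, s p ≠ p)
    (p : P) : Function.Injective (blockAt e s p) := fun x y h => by
  have h := e.symm.injective h
  exact Prod.ext (congrArg Prod.snd h) (tripleAt_injective h3 hne p (congrArg Prod.fst h))

theorem mem_range_blockAt {e : V ≃ P × A} {p : P} {v : V} :
    v ∈ Set.range (blockAt e s p) ↔ (e v).1 ∈ Set.range (tripleAt s p) := by
  constructor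
  · rintro ⟨x, rfl⟩
    exact ⟨x.2, (fst_blockAt e p x).symm⟩
  · rintro ⟨i, hi⟩
    exact ⟨((e v).2, i), e.symm_apply_eq.2 (Prod.ext hi rfl)⟩

theorem self_mem_range_blockAt (e : V ≃ P × A) (v : V) :
    v ∈ Set.range (blockAt e s (e v).1) :=
  mem_range_blockAt.2 ⟨0, rfl⟩

theorem isHFactor_comap_triangleGraph (e : V ≃ P × A) (h3 : ∀ p, s (s (s p)) = p)
    (hne : ∀ p, s p ≠ p) :
    IsHFactor ((⊤ : SimpleGraph (ZMod 3)).comap (Prod.snd : A × ZMod 3 → ZMod 3))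
      ((triangleGraph s).comap fun v => (e v).1) := by
  refine isHFactor_of_embedding preconnected_comap_snd_top fun v =>
    ⟨⟨⟨_, blockAt_injective e h3 hne (e v).1⟩, ?_⟩, self_mem_range_blockAt e v, ?_⟩
  · intro x y
    simp only [Function.Embedding.coeFn_mk, comap_adj, top_adj, fst_blockAt, triangleGraph_adj,
      (tripleAt_injective h3 hne _).ne_iff, and_iff_left_iff_imp]
    exact linked_tripleAt h3 _
  · intro x w hxw
    refine mem_range_blockAt.2 (mem_range_tripleAt_of_linked h3 (i := x.2) ?_)
    rw [← fst_blockAt e]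
    exact (triangleGraph_adj.1 hxw).2

theorem isHFactor_cliqueBlowUp (e : V ≃ P × A) (h3 : ∀ p, s (s (s p)) = p)
    (hne : ∀ p, s p ≠ p) :
    IsHFactor (⊤ : SimpleGraph (A × ZMod 3)) (cliqueBlowUp (fun v => (e v).1) s) := by
  refine isHFactor_of_embedding preconnected_top fun v =>
    ⟨⟨⟨_, blockAt_injective e h3 hne (e v).1⟩, ?_⟩, self_mem_range_blockAt e v, ?_⟩
  · intro x y
    simp only [Function.Embedding.coeFn_mk, cliqueBlowUp_adj, fst_blockAt,
      (blockAt_injective e h3 hne _).ne_iff, top_adj, and_iff_left_iff_imp]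
    intro _
    rcases eq_or_ne x.2 y.2 with h | h
    exacts [.inl (congrArg _ h), .inr (linked_tripleAt h3 _ h)]
  · intro x w hxw
    refine mem_range_blockAt.2 ?_
    rcases (cliqueBlowUp_adj.1 hxw).2 with h | h
    · exact ⟨x.2, (fst_blockAt e _ _).symm.trans h⟩
    · refine mem_range_tripleAt_of_linked h3 (i := x.2) ?_
      rwa [← fst_blockAt e]

theorem IsHFactor.congr_s12 {W W' : Type*} {H : SimpleGraph W} {H' : SimpleGraph W'}
    {F : SimpleGraph V} (h : IsHFactor H F) (e : H ≃g H') : IsHFactor H' F :=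
  fun c => (h c).map (·.trans e)

/-- The blow-ups of the parallel classes `r` of a Kirkman triple system. The class in `κ`, which
should be unique, absorbs the edges over single points. -/
def blowUpFactor {ι κ : Type*} (π : V → P) (r : ι ⊕ κ → P → P) : ι ⊕ κ → SimpleGraph V
  | .inl i => (triangleGraph (r (.inl i))).comap π
  | .inr j => cliqueBlowUp π (r (.inr j))

theorem blowUpFactor_adj_of_ne {ι κ : Type*} {π : V → P} {r : ι ⊕ κ → P → P} {c : ι ⊕ κ}
    {v w : V} (h : π v ≠ π w) : (blowUpFactor π r c).Adj v w ↔ Linked (r c) (π v) (π w) := by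
  cases c with
  | inl i => exact and_iff_right h
  | inr j =>
    rw [blowUpFactor, cliqueBlowUp_adj, or_iff_right h, and_iff_right (ne_of_apply_ne π h)]

theorem IsKirkman.existsUnique_blowUpFactor_adj {ι κ : Type*} [Finite ι] [Unique κ]
    {r : ι ⊕ κ → P → P} (h : IsKirkman r) (hcard : Nat.card P = 2 * Nat.card (ι ⊕ κ) + 1)
    {π : V → P} {v w : V} (hvw : v ≠ w) : ∃! c, (blowUpFactor π r c).Adj v w := by
  rcases eq_or_ne (π v) (π w) with hπ | hπ
  · refine ⟨.inr default, cliqueBlowUp_adj.2 ⟨hvw, .inl hπ⟩, ?_⟩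
    rintro (i | j) hc
    · exact absurd hπ (triangleGraph_adj.1 hc).1
    · rw [Unique.eq_default j]
  · simp only [blowUpFactor_adj_of_ne hπ]
    exact existsUnique_of_exists_of_unique (h.exists_linked _ _ hπ)
      fun _ _ => h.linked_unique hcard

end BlowUp

theorem Kn_K777_K21_decomp_general {V A B : Type*} (t : ℕ) (e : V ≃ Fin (6 * t + 3) × A)
    (f : B ≃ A × ZMod 3) :
    IsFactorDecomp (⊤ : SimpleGraph V)
      ((⊤ : SimpleGraph (ZMod 3)).comap (Prod.snd : A × ZMod 3 → ZMod 3))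
      (⊤ : SimpleGraph B) (3 * t) 1 := by
  obtain ⟨r, hr⟩ : ∃ r : Fin (3 * t) ⊕ Fin 1 → Fin (6 * t + 3) → Fin (6 * t + 3), IsKirkman r :=
    (hasKirkmanSystem t).imp' _ fun r hr => hr.transport (Equiv.refl _) finSumFinEquiv
  have hcard : Nat.card (Fin (6 * t + 3)) = 2 * Nat.card (Fin (3 * t) ⊕ Fin 1) + 1 := by
    rw [Nat.card_sum, Nat.card_fin, Nat.card_fin, Nat.card_fin]
    lia
  have hne := hr.rotation_ne hcard
  exact ⟨blowUpFactor (fun v => (e v).1) r, fun _ => le_top,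
    Sym2.ind fun v w hvw => hr.existsUnique_blowUpFactor_adj hcard hvw,
    fun i => isHFactor_comap_triangleGraph e (hr.iterate_three _) (hne _),
    fun j => (isHFactor_cliqueBlowUp e (hr.iterate_three _) (hne _)).congr_s12
      (Iso.completeGraph f.symm)⟩

/-- Lemma 4.1: for `n = 42t + 21` with `t ≥ 0`, `(K_n; K_{7,7,7}^{3t}, K₂₁)` exists, i.e.
the edge set of `K_n` can be partitioned into `3t` `K_{7,7,7}`-factors and one `K₂₁`-factor. -/
theorem Kn_K777_K21_decomp (t : ℕ) :
    IsFactorDecomp (⊤ : SimpleGraph (Fin (42 * t + 21))) K777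
      (⊤ : SimpleGraph (Fin 21)) (3 * t) 1 :=
  Kn_K777_K21_decomp_general (A := ZMod 7) t (Fintype.equivOfCardEq (by simp; lia))
    (Fintype.equivOfCardEq rfl)
end
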